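/- Let N ≥ 1 and p > 1, and let u_0 ∈ L^1(ℝ^N). Suppose v : ℝ^N × (0, ∞) → ℝ satisfies: (a) for each t > 0, x ↦ v(x, t) is differentiable; (b) for every t > 0 and almost every x ∈ ℝ^N, v(x, t) = (P_t * u_0)(x) + ∫_0^t (P_{t−τ} * |∇v(·, τ)|^p)(x) dτ; (c) for every q ∈ [1, ∞] and j ∈ {0, 1}, sup_{t > 0} (1+t)^{N(1 − 1/q) + j} ‖∇^j v(·, t)‖_{L^q(ℝ^N)} < ∞ (where ∇^0 v = v and ∇^1 v = ∇v). Let C_* := ∫_{ℝ^N} u_0(x) dx + ∫_0^∞ ∫_{ℝ^N} ‖∇_x v(x, τ)‖^p dx dτ (this quantity being finite under the above hypotheses). Then for every q ∈ [1, ∞]: lim_{t → ∞} t^{N(1 − 1/q)} ‖v(·, t) − C_* P_{t+1}‖_{L^q(ℝ^N)} = 0. -/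

import Mathlib

open MeasureTheory Real Filter ENNReal

/-- The normalizing constant of the Poisson kernel on `ℝ^N`. -/
noncomputable def cN (N : ℕ) : ℝ :=
  Real.Gamma (((N : ℝ) + 1) / 2) / Real.pi ^ (((N : ℝ) + 1) / 2)

/-- The Poisson kernel `P(x) = c_N (1 + ‖x‖²)^{-(N+1)/2}` on `ℝ^N`. -/
noncomputable def P (N : ℕ) (x : EuclideanSpace ℝ (Fin N)) : ℝ :=
  cN N * (1 + ‖x‖ ^ 2) ^ (-(((N : ℝ) + 1) / 2))

/-- The dilated Poisson kernel `P_t(x) = t^{-N} P(x/t)`. -/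
noncomputable def Pt (N : ℕ) (t : ℝ) (x : EuclideanSpace ℝ (Fin N)) : ℝ :=
  t ^ (-(N : ℝ)) * P N (t⁻¹ • x)

/-!
A function `f` with `‖f‖_∞ ≤ ε t^{-N}` and `‖f‖_1 ≤ ε` satisfies `t^{N(1 - 1/q)} ‖f‖_q ≤ ε` for all
`q ≥ 1`, so it suffices to prove these two bounds, with `ε → 0` as `t → ∞`, for
`v(·, t) - C_* P_{t+1}`. A unit of mass emitted at `(y, τ)` with `τ < t / 2` contributes the
discrepancy `P_{t-τ}(x - y) - P_{t+1}(x)`, which is bounded in this sense uniformly in `(y, τ)` and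
tends to `0` for each fixed `(y, τ)`; dominated convergence against the finite measures `|u_0| dy`
and `|∇v|^p dy dτ` handles both the linear part and the sources emitted before time `t / 2`. The
later sources are small because `‖∇v(·, τ)‖_p^p` decays faster than `τ^{-1}`.

Measurability of `v` in time is extracted from the mild formulation. If the Duhamel integrand is
measurable at times decreasing to `τ`, it recovers `|∇v(·, τ)|^p` as a weak limit of its Poisson
regularizations; if it is not measurable at time `t`, positivity of the kernel and continuity of
`v(·, t)` force the Duhamel integral, which is then `0` by convention at some points, to vanish
almost everywhere, so that `v(·, t) = P_t * u_0` is explicit.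
-/

open scoped Topology

section EndpointBound

variable {α Ω E : Type*} [MeasurableSpace α] [MeasurableSpace Ω] [NormedAddCommGroup E]
  {μ : Measure α} {ν : Measure Ω} {T ε δ c : ℝ≥0∞} {f g : α → E}

/-- The two endpoint estimates `‖f‖_∞ ≤ ε T` and `‖f‖_1 ≤ ε`, from which all the `L^q` estimates
follow by interpolation. The first one is required everywhere, not just almost everywhere. -/
structure EndpointBound (μ : Measure α) (T ε : ℝ≥0∞) (f : α → E) : Prop where
  enorm_le : ∀ x, ‖f x‖ₑ ≤ ε * T
  lintegral_enorm_le : ∫⁻ x, ‖f x‖ₑ ∂μ ≤ ε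

namespace EndpointBound

lemma of_enorm_le_mul (hf : EndpointBound μ T ε f) (hc : c ≠ ⊤)
    (h : ∀ x, ‖g x‖ₑ ≤ c * ‖f x‖ₑ) : EndpointBound μ T (c * ε) g where
  enorm_le x := by
    grw [h x, hf.enorm_le x, mul_assoc]
  lintegral_enorm_le := by
    grw [lintegral_mono h, lintegral_const_mul' _ _ hc, hf.lintegral_enorm_le]

lemma add (hf : EndpointBound μ T ε f) (hg : EndpointBound μ T δ g)
    (hfm : AEStronglyMeasurable f μ) : EndpointBound μ T (ε + δ) (f + g) where
  enorm_le x := by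
    grw [Pi.add_apply, enorm_add_le, hf.enorm_le x, hg.enorm_le x, add_mul]
  lintegral_enorm_le := by
    grw [← hf.lintegral_enorm_le, ← hg.lintegral_enorm_le, ← lintegral_add_left' hfm.enorm]
    exact lintegral_mono fun x ↦ enorm_add_le (f x) (g x)

lemma neg (hf : EndpointBound μ T ε f) : EndpointBound μ T ε (-f) := by
  simpa using hf.of_enorm_le_mul one_ne_top (g := -f) (by simp)

lemma sub (hf : EndpointBound μ T ε f) (hg : EndpointBound μ T δ g)
    (hfm : AEStronglyMeasurable f μ) : EndpointBound μ T (ε + δ) (f - g) :=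
  sub_eq_add_neg f g ▸ hf.add hg.neg hfm

lemma integral [NormedSpace ℝ E] [SFinite μ] [SFinite ν] {F : Ω → α → E} {ε : Ω → ℝ≥0∞}
    (hF : AEStronglyMeasurable F.uncurry (ν.prod μ))
    (h : ∀ᵐ ω ∂ν, EndpointBound μ T (ε ω) (F ω)) (hT : T ≠ ⊤) :
    EndpointBound μ T (∫⁻ ω, ε ω ∂ν) fun x ↦ ∫ ω, F ω x ∂ν where
  enorm_le x := calc
    ‖∫ ω, F ω x ∂ν‖ₑ ≤ ∫⁻ ω, ‖F ω x‖ₑ ∂ν := enorm_integral_le_lintegral_enorm _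
    _ ≤ ∫⁻ ω, ε ω * T ∂ν := lintegral_mono_ae (h.mono fun _ hω ↦ hω.enorm_le x)
    _ = (∫⁻ ω, ε ω ∂ν) * T := lintegral_mul_const' _ _ hT
  lintegral_enorm_le := calc
    ∫⁻ x, ‖∫ ω, F ω x ∂ν‖ₑ ∂μ ≤ ∫⁻ x, ∫⁻ ω, ‖F ω x‖ₑ ∂ν ∂μ :=
      lintegral_mono fun _ ↦ enorm_integral_le_lintegral_enorm _
    _ = ∫⁻ ω, ∫⁻ x, ‖F ω x‖ₑ ∂μ ∂ν := (lintegral_lintegral_swap hF.enorm).symm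
    _ ≤ ∫⁻ ω, ε ω ∂ν := lintegral_mono_ae (h.mono fun _ hω ↦ hω.lintegral_enorm_le)

lemma lintegral_enorm_rpow_le (hf : EndpointBound μ T ε f) (hε : ε ≠ ⊤) (hT : T ≠ ⊤) {r : ℝ}
    (hr : 1 ≤ r) : ∫⁻ x, ‖f x‖ₑ ^ r ∂μ ≤ ε ^ r * T ^ (r - 1) := by
  have rpow_eq (a : ℝ≥0∞) : a ^ r = a ^ (r - 1) * a := by
    conv_lhs => rw [← sub_add_cancel r 1]
    rw [ENNReal.rpow_add_of_nonneg _ _ (by linarith) zero_le_one, ENNReal.rpow_one]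
  calc ∫⁻ x, ‖f x‖ₑ ^ r ∂μ ≤ ∫⁻ x, (ε * T) ^ (r - 1) * ‖f x‖ₑ ∂μ :=
        lintegral_mono fun x ↦ by
          rw [rpow_eq]
          gcongr
          exact hf.enorm_le x
    _ = (ε * T) ^ (r - 1) * ∫⁻ x, ‖f x‖ₑ ∂μ :=
        lintegral_const_mul' _ _
          (ENNReal.rpow_ne_top_of_nonneg (by linarith) (ENNReal.mul_ne_top hε hT))
    _ ≤ (ε * T) ^ (r - 1) * ε := by grw [hf.lintegral_enorm_le]
    _ = ε ^ r * T ^ (r - 1) := by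
        rw [ENNReal.mul_rpow_of_nonneg _ _ (by linarith), rpow_eq ε]
        ring

lemma eLpNorm_le (hf : EndpointBound μ T ε f) (hε : ε ≠ ⊤) (hT : T ≠ ⊤) {q : ℝ≥0∞}
    (hq : 1 ≤ q) : eLpNorm f q μ ≤ ε * T ^ (1 - (1 / q).toReal) := by
  rcases eq_or_ne q ⊤ with rfl | hq_top
  · simpa [eLpNormEssSup] using essSup_le_of_ae_le _ (ae_of_all μ hf.enorm_le)
  have hr : 1 ≤ q.toReal := by simpa using ENNReal.toReal_mono hq_top hq
  have hr0 : 0 < q.toReal := by linarith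
  rw [eLpNorm_eq_lintegral_rpow_enorm_toReal (by positivity) hq_top]
  calc (∫⁻ x, ‖f x‖ₑ ^ q.toReal ∂μ) ^ (1 / q.toReal)
      ≤ (ε ^ q.toReal * T ^ (q.toReal - 1)) ^ (1 / q.toReal) := by
        grw [hf.lintegral_enorm_rpow_le hε hT hr]
    _ = ε * T ^ (1 - (1 / q).toReal) := by
        rw [ENNReal.mul_rpow_of_nonneg _ _ (by positivity), ← ENNReal.rpow_mul,
          ← ENNReal.rpow_mul, mul_one_div_cancel hr0.ne', ENNReal.rpow_one, sub_mul,
          mul_one_div_cancel hr0.ne', one_mul, ENNReal.toReal_div, ENNReal.toReal_one]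

end EndpointBound

end EndpointBound

section MeasurabilityInParameter

variable {Ω X Y : Type*} [MeasurableSpace Ω] {μ : Measure Ω}
  [TopologicalSpace Y] [TopologicalSpace.PseudoMetrizableSpace Y] {u : Ω → X → Y}

lemma aestronglyMeasurable_uncurry_comp_simpleFunc [MeasurableSpace X] {ν : Measure X} [SFinite ν]
    (hm : ∀ x, AEStronglyMeasurable (u · x) μ) (s : SimpleFunc X X) :
    AEStronglyMeasurable (fun z : Ω × X ↦ u z.1 (s z.2)) (μ.prod ν) := by
  have hcover : (⋃ x : s.range, Prod.snd ⁻¹' (s ⁻¹' {x.1})) = (Set.univ : Set (Ω × X)) := by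
    ext z
    simp
  rw [← Measure.restrict_univ (μ := μ.prod ν), ← hcover, aestronglyMeasurable_iUnion_iff]
  intro x
  refine ((hm x).comp_fst (ν := ν)).restrict.congr ?_
  filter_upwards [ae_restrict_mem (measurable_snd (s.measurableSet_fiber x))] with z hz
  rw [show s z.2 = x from hz]

variable [TopologicalSpace X]

lemma aestronglyMeasurable_uncurry_of_ae_continuous [SecondCountableTopology X]
    [TopologicalSpace.PseudoMetrizableSpace X] [MeasurableSpace X] [OpensMeasurableSpace X]
    {ν : Measure X} [SFinite ν] (hc : ∀ᵐ ω ∂μ, Continuous (u ω))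
    (hm : ∀ x, AEStronglyMeasurable (u · x) μ) :
    AEStronglyMeasurable u.uncurry (μ.prod ν) := by
  have hid : StronglyMeasurable (id : X → X) := stronglyMeasurable_id
  refine aestronglyMeasurable_of_tendsto_ae atTop
    (fun n ↦ aestronglyMeasurable_uncurry_comp_simpleFunc hm (hid.approx n)) ?_
  filter_upwards [Measure.quasiMeasurePreserving_fst.ae hc] with z hz
  exact (hz.tendsto z.2).comp (hid.tendsto_approx z.2)

lemma isClosed_setOf_aestronglyMeasurable [FrechetUrysohnSpace X]
    (hc : ∀ᵐ ω ∂μ, Continuous (u ω)) : IsClosed {x | AEStronglyMeasurable (u · x) μ} :=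
  IsSeqClosed.isClosed fun _ x hs hsx ↦
    aestronglyMeasurable_of_tendsto_ae atTop hs <| hc.mono fun _ hω ↦ (hω.tendsto x).comp hsx

end MeasurabilityInParameter

section Dichotomy

variable {Ω X : Type*} [MeasurableSpace Ω] {μ : Measure Ω} [TopologicalSpace X]
  [MeasurableSpace X] [OpensMeasurableSpace X] {ν : Measure X} [ν.IsOpenPosMeasure]
  {A O : Set X} {w F : X → ℝ}

lemma eqOn_zero_of_isOpen_of_ae (hO : IsOpen O) (hw : Continuous w)
    (h : ∀ᵐ x ∂ν, x ∈ O → w x = 0) : Set.EqOn w 0 O :=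
  Measure.eqOn_open_of_ae_eq ((ae_restrict_iff' hO.measurableSet).2 h) hO hw.continuousOn
    continuousOn_const

lemma isOpen_setOf_eq_zero_of_ae_eq (hA : IsClosed A) (hF : ContinuousOn F A)
    (hFpos : ∀ x ∈ A, 0 < F x) (hFzero : ∀ x ∉ A, F x = 0) (hw : Continuous w) (hwF : w =ᵐ[ν] F) :
    IsOpen {x | w x = 0} := by
  have hwA : Set.EqOn w 0 Aᶜ := eqOn_zero_of_isOpen_of_ae (ν := ν) hA.isOpen_compl hw <| by
    filter_upwards [hwF] with x hx hxA
    rw [hx, hFzero x hxA]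
  refine isOpen_iff_mem_nhds.2 fun x hx ↦ ?_
  by_cases hxA : x ∈ A
  · have hF_near : ∀ᶠ z in 𝓝 x, z ∈ A → F x / 2 < F z :=
      eventually_nhdsWithin_iff.1 <|
        (hF x hxA).eventually (lt_mem_nhds (half_lt_self (hFpos x hxA)))
    have hw_near : ∀ᶠ z in 𝓝 x, w z < F x / 2 :=
      hw.continuousAt.eventually (gt_mem_nhds (hx.trans_lt (half_pos (hFpos x hxA))))
    obtain ⟨O, hO, hO_open, hxO⟩ := eventually_nhds_iff.1 (hF_near.and hw_near)
    refine mem_of_superset (hO_open.mem_nhds hxO) (eqOn_zero_of_isOpen_of_ae (ν := ν) hO_open hw ?_)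
    filter_upwards [hwF] with z hz hzO
    exact hwA fun hzA ↦ ((hO z hzO).1 hzA).not_gt (hz ▸ (hO z hzO).2)
  · exact mem_of_superset (hA.isOpen_compl.mem_nhds hxA) hwA

lemma eq_zero_of_ae_eq_of_pos [PreconnectedSpace X] (hA : IsClosed A) (hA_ne : A ≠ Set.univ)
    (hF : ContinuousOn F A) (hFpos : ∀ x ∈ A, 0 < F x) (hFzero : ∀ x ∉ A, F x = 0)
    (hw : Continuous w) (hwF : w =ᵐ[ν] F) : w = 0 := by
  obtain ⟨x, hx⟩ := (Set.ne_univ_iff_exists_notMem A).1 hA_ne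
  have hwx : w x = 0 := eqOn_zero_of_isOpen_of_ae (ν := ν) hA.isOpen_compl hw
    (hwF.mono fun z hz hzA ↦ hz.trans (hFzero z hzA)) hx
  have hclopen : IsClopen {x | w x = 0} :=
    ⟨isClosed_eq hw continuous_const, isOpen_setOf_eq_zero_of_ae_eq hA hF hFpos hFzero hw hwF⟩
  exact funext (Set.eq_univ_iff_forall.1 (hclopen.eq_univ ⟨x, hwx⟩))

-- Where `u · x` is not measurable its integral is `0` by convention. If this happens at some `x`,
-- then `u · x` vanishes almost everywhere at no point of `A := {x | u · x is measurable}`, so the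
-- integral is positive and continuous on the closed set `A` and zero off `A`.
lemma forall_aestronglyMeasurable_or_eq_zero [PreconnectedSpace X] [FirstCountableTopology X]
    {u : Ω → X → ℝ} (hc : ∀ᵐ ω ∂μ, Continuous (u ω)) (hnonneg : ∀ᵐ ω ∂μ, ∀ x, 0 ≤ u ω x)
    {b : Ω → ℝ} (hb : Integrable b μ) (hle : ∀ᵐ ω ∂μ, ∀ x, u ω x ≤ b ω)
    (hzero : ∀ᵐ ω ∂μ, ∀ x y, u ω x = 0 → u ω y = 0) (hw : Continuous w)
    (hwu : ∀ᵐ x ∂ν, w x = ∫ ω, u ω x ∂μ) :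
    (∀ x, AEStronglyMeasurable (u · x) μ) ∨ w = 0 := by
  refine or_iff_not_imp_left.2 fun hnot ↦ ?_
  obtain ⟨x₀, hx₀⟩ := not_forall.1 hnot
  have hnorm (x : X) : ∀ᵐ ω ∂μ, ‖u ω x‖ ≤ b ω := by
    filter_upwards [hnonneg, hle] with ω h₀ h₁
    rw [Real.norm_of_nonneg (h₀ x)]
    exact h₁ x
  refine eq_zero_of_ae_eq_of_pos (isClosed_setOf_aestronglyMeasurable hc)
    (fun h ↦ hnot (Set.eq_univ_iff_forall.1 h)) (fun x _ ↦ ?_) (fun x hx ↦ ?_)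
    (fun x ↦ integral_non_aestronglyMeasurable) hw hwu
  · exact continuousWithinAt_of_dominated eventually_mem_nhdsWithin (.of_forall hnorm) hb
      (hc.mono fun ω hω ↦ hω.continuousWithinAt)
  · have hnonneg_x : 0 ≤ᵐ[μ] (u · x) := hnonneg.mono fun ω hω ↦ hω x
    refine (integral_nonneg_of_ae hnonneg_x).lt_of_ne' fun h ↦ hx₀ ?_
    have hux : (u · x) =ᵐ[μ] 0 :=
      (integral_eq_zero_iff_of_nonneg_ae hnonneg_x (hb.mono' hx (hnorm x))).1 h
    refine (aestronglyMeasurable_const (b := (0 : ℝ))).congr ?_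
    filter_upwards [hux, hzero] with ω h₁ h₂
    exact (h₂ x x₀ h₁).symm

end Dichotomy

section LimitsFromTheRight

variable {F : ℝ → ℝ → ℝ≥0∞} {f : ℝ → ℝ≥0∞} {S : Set ℝ}

lemma limsup_nhdsWithin_inter_Ioi_eq_iInf_iSup (S : Set ℝ) (h : ℝ → ℝ≥0∞) (τ : ℝ) :
    limsup h (𝓝[S ∩ Set.Ioi τ] τ) =
      ⨅ n : ℕ, ⨆ q ∈ S, (Metric.ball q (1 / (n + 1)) ∩ Set.Iio q).indicator (fun _ ↦ h q) τ := by
  rw [(nhdsWithin_hasBasis Metric.nhds_basis_ball_inv_nat_succ _).limsup_eq_iInf_iSup]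
  refine iInf_congr fun n ↦ ?_
  rw [iInf_pos trivial]
  refine le_antisymm (iSup₂_le fun q hq ↦ ?_) (iSup₂_le fun q hq ↦ ?_)
  · have hτ : τ ∈ Metric.ball q (1 / (n + 1)) ∩ Set.Iio q := ⟨Metric.mem_ball_comm.1 hq.1, hq.2.2⟩
    exact le_iSup₂_of_le q hq.2.1 (Set.indicator_of_mem hτ (fun _ ↦ h q)).ge
  · exact Set.indicator_apply_le' (fun hτ ↦
      le_iSup₂_of_le q ⟨Metric.mem_ball_comm.1 hτ.1, hq, hτ.2⟩ le_rfl) fun _ ↦ zero_le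

lemma ae_restrict_closure_nhdsWithin_Ioi_neBot (μ : Measure ℝ) [NullSingletonClass μ] :
    ∀ᵐ τ ∂μ.restrict (closure S), (𝓝[S ∩ Set.Ioi τ] τ).NeBot := by
  filter_upwards [ae_restrict_mem isClosed_closure.measurableSet, ae_restrict_of_ae
    ((countable_setOfPred_isolated_right_within (s := closure S)).ae_notMem μ)] with τ hτ hisol
  have h : (𝓝[closure S ∩ Set.Ioi τ] τ).NeBot := ⟨fun h ↦ hisol ⟨hτ, h⟩⟩
  rw [← mem_closure_iff_nhdsWithin_neBot] at h ⊢
  exact closure_minimal (Set.inter_comm _ S ▸ Set.inter_comm _ (closure S) ▸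
    isOpen_Ioi.inter_closure) isClosed_closure h

lemma aemeasurable_closure_of_tendsto_right_of_countable {μ : Measure ℝ} [NullSingletonClass μ]
    (hS : S.Countable) (hF : ∀ q ∈ S, AEMeasurable (F q) (μ.restrict (Set.Iio q)))
    (hlim : ∀ᵐ τ ∂μ, Tendsto (F · τ) (𝓝[S ∩ Set.Ioi τ] τ) (𝓝 (f τ))) :
    AEMeasurable f (μ.restrict (closure S)) := by
  choose! m hm hFm using hF
  have hFm_ae : ∀ᵐ τ ∂μ, ∀ q ∈ S, τ < q → F q τ = m q τ :=
    (ae_ball_iff hS).2 fun q hq ↦ (ae_restrict_iff' measurableSet_Iio).1 (hFm q hq)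
  refine ⟨fun τ ↦ ⨅ n : ℕ, ⨆ q ∈ S,
    (Metric.ball q (1 / (n + 1)) ∩ Set.Iio q).indicator (m q) τ, ?_, ?_⟩
  · exact .iInf fun n ↦ .biSup S hS fun q hq ↦
      (hm q hq).indicator (Metric.isOpen_ball.measurableSet.inter measurableSet_Iio)
  · filter_upwards [ae_restrict_closure_nhdsWithin_Ioi_neBot μ, ae_restrict_of_ae hlim,
      ae_restrict_of_ae hFm_ae] with τ _ hτ hτm
    rw [← hτ.limsup_eq, limsup_nhdsWithin_inter_Ioi_eq_iInf_iSup]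
    refine iInf_congr fun n ↦ biSup_congr fun q hq ↦ ?_
    by_cases h : τ ∈ Metric.ball q (1 / (n + 1)) ∩ Set.Iio q
    · rw [Set.indicator_of_mem h, Set.indicator_of_mem h, hτm q hq h.2]
    · rw [Set.indicator_of_notMem h, Set.indicator_of_notMem h]

lemma aemeasurable_closure_of_tendsto_right {μ : Measure ℝ} [NullSingletonClass μ]
    (hF : ∀ q ∈ S, AEMeasurable (F q) (μ.restrict (Set.Iio q)))
    (hlim : ∀ᵐ τ ∂μ, Tendsto (F · τ) (𝓝[S ∩ Set.Ioi τ] τ) (𝓝 (f τ))) :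
    AEMeasurable f (μ.restrict (closure S)) := by
  obtain ⟨Q, hQS, hQ, hSQ⟩ :=
    (TopologicalSpace.IsSeparable.of_separableSpace S).exists_countable_dense_subset
  rw [(closure_mono hQS).antisymm' (closure_minimal hSQ isClosed_closure)]
  exact aemeasurable_closure_of_tendsto_right_of_countable hQ (fun q hq ↦ hF q (hQS hq))
    (hlim.mono fun τ hτ ↦ hτ.mono_left (nhdsWithin_mono _ (Set.inter_subset_inter_left _ hQS)))

end LimitsFromTheRight

section PoissonKernel

variable {N : ℕ} {t : ℝ}

lemma cN_pos (N : ℕ) : 0 < cN N :=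
  div_pos (Real.Gamma_pos_of_pos (by positivity)) (by positivity)

lemma P_pos (x : EuclideanSpace ℝ (Fin N)) : 0 < P N x :=
  mul_pos (cN_pos N) (by positivity)

lemma P_le_cN (x : EuclideanSpace ℝ (Fin N)) : P N x ≤ cN N :=
  mul_le_of_le_one_right (cN_pos N).le <|
    Real.rpow_le_one_of_one_le_of_nonpos (by simp) (neg_nonpos.2 (by positivity))

lemma continuous_P (N : ℕ) : Continuous (P N) :=
  continuous_const.mul ((by fun_prop : Continuous _).rpow_const fun x ↦ .inl (by positivity))

lemma integrable_P (N : ℕ) : Integrable (P N) := by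
  have h := integrable_rpow_neg_one_add_norm_sq (E := EuclideanSpace ℝ (Fin N)) (μ := volume)
    (r := (N : ℝ) + 1) (by simp)
  rw [neg_div] at h
  exact h.const_mul _

lemma Pt_pos (ht : 0 < t) (x : EuclideanSpace ℝ (Fin N)) : 0 < Pt N t x :=
  mul_pos (Real.rpow_pos_of_pos ht _) (P_pos _)

lemma Pt_le (ht : 0 < t) (x : EuclideanSpace ℝ (Fin N)) : Pt N t x ≤ cN N * t ^ (-(N : ℝ)) := by
  rw [mul_comm, Pt]
  gcongr
  exact P_le_cN _

lemma measurable_uncurry_Pt (N : ℕ) : Measurable (Pt N).uncurry :=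
  .mul (by fun_prop) ((continuous_P N).measurable.comp (by fun_prop))

lemma continuousAt_uncurry_Pt (ht : 0 < t) (x : EuclideanSpace ℝ (Fin N)) :
    ContinuousAt (Pt N).uncurry (t, x) :=
  (continuousAt_fst.rpow_const (.inl ht.ne')).mul <|
    (continuous_P N).continuousAt.comp ((continuousAt_fst.inv₀ ht.ne').smul continuousAt_snd)

lemma continuous_Pt (N : ℕ) (t : ℝ) : Continuous (Pt N t) :=
  continuous_const.mul ((continuous_P N).comp (by fun_prop))

/-- The total mass of the Poisson kernel. It equals `1`; only its positivity and finiteness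
matter here. -/
noncomputable def poissonMass (N : ℕ) : ℝ≥0∞ := ∫⁻ x, ENNReal.ofReal (P N x)

lemma poissonMass_ne_top (N : ℕ) : poissonMass N ≠ ⊤ :=
  ((integrable_P N).lintegral_lt_top).ne

lemma poissonMass_ne_zero (N : ℕ) : poissonMass N ≠ 0 := by
  have hP : Measurable fun x ↦ ENNReal.ofReal (P N x) := (continuous_P N).measurable.ennreal_ofReal
  simp [poissonMass, lintegral_eq_zero_iff hP, EventuallyEq, P_pos, ae_iff,
    NeZero.ne (volume : Measure (EuclideanSpace ℝ (Fin N)))]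

lemma lintegral_Pt_sub_mul (ht : 0 < t) (y : EuclideanSpace ℝ (Fin N))
    (f : EuclideanSpace ℝ (Fin N) → ℝ≥0∞) :
    ∫⁻ x, ENNReal.ofReal (Pt N t (x - y)) * f x =
      ∫⁻ z, ENNReal.ofReal (P N z) * f (y + t • z) := by
  have hmap := Measure.map_addHaar_smul (volume : Measure (EuclideanSpace ℝ (Fin N))) ht.ne'
  have hscale (x : EuclideanSpace ℝ (Fin N)) : ENNReal.ofReal (Pt N t x) * f (y + x) =
      ENNReal.ofReal (t ^ (-(N : ℝ))) * (ENNReal.ofReal (P N (t⁻¹ • x)) * f (y + x)) := by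
    rw [Pt, ENNReal.ofReal_mul (by positivity), mul_assoc]
  calc ∫⁻ x, ENNReal.ofReal (Pt N t (x - y)) * f x
      = ∫⁻ x, ENNReal.ofReal (Pt N t x) * f (y + x) := by
        simpa using lintegral_sub_right_eq_self (μ := volume)
          (fun x ↦ ENNReal.ofReal (Pt N t x) * f (y + x)) y
    _ = ∫⁻ x, ENNReal.ofReal (P N (t⁻¹ • x)) * f (y + x) ∂volume.map (t • ·) := by
        simp_rw [hscale]
        rw [hmap, lintegral_smul_measure, lintegral_const_mul' _ _ ENNReal.ofReal_ne_top,
          smul_eq_mul, finrank_euclideanSpace_fin, abs_of_pos (by positivity), Real.rpow_neg ht.le,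
          Real.rpow_natCast]
    _ = ∫⁻ z, ENNReal.ofReal (P N z) * f (y + t • z) := by
        rw [show (t • · : EuclideanSpace ℝ (Fin N) → _) = (MeasurableEquiv.smul₀ t ht.ne') from rfl,
          lintegral_map_equiv]
        simp [smul_smul, ht.ne']

lemma lintegral_Pt_sub_left (ht : 0 < t) (y : EuclideanSpace ℝ (Fin N)) :
    ∫⁻ x, ENNReal.ofReal (Pt N t (x - y)) = poissonMass N := by
  simpa [poissonMass] using lintegral_Pt_sub_mul ht y 1

lemma lintegral_Pt_sub_right (ht : 0 < t) (x : EuclideanSpace ℝ (Fin N)) :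
    ∫⁻ y, ENNReal.ofReal (Pt N t (x - y)) = poissonMass N := by
  rw [lintegral_sub_left_eq_self (fun y ↦ ENNReal.ofReal (Pt N t y)),
    ← lintegral_Pt_sub_left ht 0]
  simp

end PoissonKernel

section KernelComparison

variable {N : ℕ} {s r l : ℝ} {x y z : EuclideanSpace ℝ (Fin N)}

lemma Pt_eq (hs : 0 < s) (x : EuclideanSpace ℝ (Fin N)) :
    Pt N s x = cN N * (s * (s ^ 2 + ‖x‖ ^ 2) ^ (-(((N : ℝ) + 1) / 2))) := by
  have hbase : 1 + ‖s⁻¹ • x‖ ^ 2 = (s ^ 2)⁻¹ * (s ^ 2 + ‖x‖ ^ 2) := by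
    rw [norm_smul, norm_inv, Real.norm_of_nonneg hs.le]
    field_simp
  have hpow : ((s ^ 2)⁻¹) ^ (-(((N : ℝ) + 1) / 2)) = s ^ (N : ℝ) * s := by
    rw [Real.inv_rpow (by positivity), Real.rpow_neg (by positivity), inv_inv,
      ← Real.rpow_two, ← Real.rpow_mul hs.le, mul_div_cancel₀ _ two_ne_zero,
      Real.rpow_add_one hs.ne']
  have hcancel : s ^ (-(N : ℝ)) * s ^ (N : ℝ) = 1 := by
    rw [← Real.rpow_add hs, neg_add_cancel, Real.rpow_zero]
  rw [Pt, P, hbase, Real.mul_rpow (by positivity) (by positivity), hpow]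
  linear_combination (cN N * s * (s ^ 2 + ‖x‖ ^ 2) ^ (-(((N : ℝ) + 1) / 2))) * hcancel

lemma rpow_neg_le_mul_rpow_neg {X Y L a : ℝ} (hX : 0 < X) (hY : 0 < Y) (ha : 0 ≤ a)
    (h : Y ≤ L * X) : X ^ (-a) ≤ L ^ a * Y ^ (-a) := by
  have hL : 0 ≤ L := nonneg_of_mul_nonneg_left (hY.le.trans h) hX
  rw [Real.rpow_neg hX.le, Real.rpow_neg hY.le, ← div_eq_mul_inv,
    inv_le_iff_one_le_mul₀ (by positivity), div_mul_eq_mul_div, one_le_div (by positivity),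
    ← Real.mul_rpow hL hX.le]
  exact Real.rpow_le_rpow hY.le h ha

lemma Pt_le_mul_Pt {L : ℝ} (hs : 0 < s) (hr : 0 < r) (hl : s ≤ l * r)
    (hL : r ^ 2 + ‖x‖ ^ 2 ≤ L * (s ^ 2 + ‖z‖ ^ 2)) :
    Pt N s z ≤ l * L ^ (((N : ℝ) + 1) / 2) * Pt N r x := by
  rw [Pt_eq hs, Pt_eq hr]
  have hpow := rpow_neg_le_mul_rpow_neg (X := s ^ 2 + ‖z‖ ^ 2) (Y := r ^ 2 + ‖x‖ ^ 2)
    (a := ((N : ℝ) + 1) / 2) (by positivity) (by positivity) (by positivity) hL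
  have := cN_pos N
  calc _ ≤ cN N * ((l * r) * (L ^ (((N : ℝ) + 1) / 2) *
        (r ^ 2 + ‖x‖ ^ 2) ^ (-(((N : ℝ) + 1) / 2)))) := by
        gcongr
        exact hs.le.trans hl
    _ = _ := by ring

lemma abs_sub_le_of_le_mul {a b c : ℝ} (hc : 1 ≤ c) (hab : a ≤ c * b)
    (hba : b ≤ c * a) : |a - b| ≤ (c - 1) * b := by
  refine abs_le.2 ⟨?_, by linarith⟩
  rcases le_total a b with h | h
  · nlinarith
  · nlinarith

/-- The factor up to which `Pt s (x - y)` and `Pt r x` are comparable, as a function of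
`l = r / s` and `b = ‖y‖ / r`. It tends to `1` as `l → 1` and `b → 0`. -/
noncomputable def comparisonFactor (N : ℕ) (l b : ℝ) : ℝ :=
  l * (l ^ 2 * (1 + b + b ^ 2)) ^ (((N : ℝ) + 1) / 2)

lemma one_le_comparisonFactor (N : ℕ) {b : ℝ} (hl : 1 ≤ l) (hb : 0 ≤ b) :
    1 ≤ comparisonFactor N l b := by
  have hbase : 1 ≤ l ^ 2 * (1 + b + b ^ 2) :=
    one_le_mul_of_one_le_of_one_le (one_le_pow₀ hl) (by nlinarith)
  exact one_le_mul_of_one_le_of_one_le hl (Real.one_le_rpow hbase (by positivity))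

lemma comparisonFactor_one_zero (N : ℕ) : comparisonFactor N 1 0 = 1 := by
  simp [comparisonFactor]

lemma continuous_uncurry_comparisonFactor (N : ℕ) : Continuous (comparisonFactor N).uncurry :=
  continuous_fst.mul (.rpow_const (by fun_prop) fun _ ↦ .inr (by positivity))

lemma sq_add_sq_le_of_le_add {b c d : ℝ} (hb : 0 ≤ b) (hd : 0 ≤ d) (h : d ≤ c + b * r) :
    r ^ 2 + d ^ 2 ≤ (1 + b + b ^ 2) * (r ^ 2 + c ^ 2) := by
  have hsq : d ^ 2 ≤ (c + b * r) ^ 2 := by gcongr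
  nlinarith [mul_nonneg hb (sq_nonneg (c - r)), mul_nonneg (sq_nonneg b) (sq_nonneg c)]

lemma abs_Pt_sub_Pt_le (hs : 0 < s) (hsr : s ≤ r) (x y : EuclideanSpace ℝ (Fin N)) :
    |Pt N s (x - y) - Pt N r x| ≤ (comparisonFactor N (r / s) (‖y‖ / r) - 1) * Pt N r x := by
  have hr : 0 < r := hs.trans_le hsr
  have hl : 1 ≤ r / s := (one_le_div hs).2 hsr
  have hb : 0 ≤ ‖y‖ / r := by positivity
  have hls : r / s * s = r := div_mul_cancel₀ r hs.ne'
  have hbr : ‖y‖ / r * r = ‖y‖ := div_mul_cancel₀ _ hr.ne'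
  have hx : ‖x‖ ≤ ‖x - y‖ + ‖y‖ / r * r := by
    simpa [hbr] using norm_add_le (x - y) y
  have hxy : ‖x - y‖ ≤ ‖x‖ + ‖y‖ / r * r := by
    simpa [hbr] using norm_sub_le x y
  have hsq : s ^ 2 ≤ r ^ 2 := by gcongr
  have hrs : r ^ 2 = (r / s) ^ 2 * s ^ 2 := by rw [← mul_pow, hls]
  have hl2 : 1 ≤ (r / s) ^ 2 := one_le_pow₀ hl
  refine abs_sub_le_of_le_mul (one_le_comparisonFactor N hl hb) ?_ ?_
  · refine Pt_le_mul_Pt hs hr (by nlinarith) ?_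
    calc r ^ 2 + ‖x‖ ^ 2 ≤ (1 + ‖y‖ / r + (‖y‖ / r) ^ 2) * (r ^ 2 + ‖x - y‖ ^ 2) :=
          sq_add_sq_le_of_le_add hb (norm_nonneg _) hx
      _ ≤ (1 + ‖y‖ / r + (‖y‖ / r) ^ 2) * ((r / s) ^ 2 * (s ^ 2 + ‖x - y‖ ^ 2)) := by
          gcongr
          nlinarith [sq_nonneg ‖x - y‖]
      _ = _ := by ring
  · refine Pt_le_mul_Pt hr hs hls.ge ?_
    calc s ^ 2 + ‖x - y‖ ^ 2 ≤ r ^ 2 + ‖x - y‖ ^ 2 := by gcongr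
      _ ≤ (1 + ‖y‖ / r + (‖y‖ / r) ^ 2) * (r ^ 2 + ‖x‖ ^ 2) :=
          sq_add_sq_le_of_le_add hb (norm_nonneg _) hxy
      _ ≤ _ := by
          gcongr
          exact le_mul_of_one_le_left (by positivity) hl2

end KernelComparison

section DiscrepancyKernel

variable {N : ℕ} {s t τ : ℝ}

/-- A constant `C` for which `‖P_s‖_∞ ≤ C t^{-N}` and `‖P_s‖_1 ≤ C` as soon as `t / 2 ≤ s`. -/
noncomputable def kernelConst (N : ℕ) : ℝ≥0∞ := ENNReal.ofReal (cN N * 2 ^ N) + poissonMass N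

lemma kernelConst_ne_top (N : ℕ) : kernelConst N ≠ ⊤ :=
  ENNReal.add_ne_top.2 ⟨ENNReal.ofReal_ne_top, poissonMass_ne_top N⟩

lemma enorm_Pt (hs : 0 < s) (x : EuclideanSpace ℝ (Fin N)) :
    ‖Pt N s x‖ₑ = ENNReal.ofReal (Pt N s x) :=
  Real.enorm_of_nonneg (Pt_pos hs x).le

lemma half_rpow_neg_natCast (ht : 0 ≤ t) (N : ℕ) :
    (t / 2) ^ (-(N : ℝ)) = 2 ^ N * t ^ (-(N : ℝ)) := by
  rw [Real.div_rpow ht zero_le_two, Real.rpow_neg zero_le_two, Real.rpow_natCast, div_inv_eq_mul,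
    mul_comm]

lemma endpointBound_Pt_sub (ht : 0 < t) (hts : t / 2 ≤ s) (y : EuclideanSpace ℝ (Fin N)) :
    EndpointBound volume (ENNReal.ofReal (t ^ (-(N : ℝ)))) (kernelConst N)
      fun x ↦ Pt N s (x - y) := by
  have hs : 0 < s := (half_pos ht).trans_le hts
  refine ⟨fun x ↦ ?_, ?_⟩
  · have hPt : Pt N s (x - y) ≤ cN N * 2 ^ N * t ^ (-(N : ℝ)) := calc
      Pt N s (x - y) ≤ cN N * s ^ (-(N : ℝ)) := Pt_le hs _
      _ ≤ cN N * (t / 2) ^ (-(N : ℝ)) :=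
        mul_le_mul_of_nonneg_left
          (Real.rpow_le_rpow_of_nonpos (half_pos ht) hts (neg_nonpos.2 N.cast_nonneg))
          (cN_pos N).le
      _ = cN N * 2 ^ N * t ^ (-(N : ℝ)) := by rw [half_rpow_neg_natCast ht.le, mul_assoc]
    grw [enorm_Pt hs, hPt, ENNReal.ofReal_mul (by have := cN_pos N; positivity), kernelConst,
      ← le_self_add]
  · simp_rw [enorm_Pt hs, lintegral_Pt_sub_left hs]
    exact le_add_self

/-- The kernel turning a unit source at `(y, τ)` into the difference between its contribution to
the solution at `(x, t)` and its contribution to the limit profile `P_{t+1}`. Sources emitted after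
time `t / 2` are discarded from the first term, since there the kernel `P_{t-τ}` is singular. -/
noncomputable def discrepancyKernel (N : ℕ) (t τ : ℝ) (x y : EuclideanSpace ℝ (Fin N)) : ℝ :=
  (if τ < t / 2 then Pt N (t - τ) (x - y) else 0) - Pt N (t + 1) x

/-- The size of `discrepancyKernel` in the sense of `EndpointBound`. -/
noncomputable def discrepancyWeight (N : ℕ) (t τ : ℝ) (y : EuclideanSpace ℝ (Fin N)) : ℝ≥0∞ :=
  if τ < t / 2 then
    min 2 (ENNReal.ofReal (comparisonFactor N ((t + 1) / (t - τ)) (‖y‖ / (t + 1)) - 1)) *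
      kernelConst N
  else kernelConst N

lemma endpointBound_discrepancyKernel (ht : 0 < t) (hτ : 0 ≤ τ)
    (y : EuclideanSpace ℝ (Fin N)) :
    EndpointBound volume (ENNReal.ofReal (t ^ (-(N : ℝ)))) (discrepancyWeight N t τ y)
      fun x ↦ discrepancyKernel N t τ x y := by
  have hprofile : EndpointBound volume (ENNReal.ofReal (t ^ (-(N : ℝ)))) (kernelConst N)
      (Pt N (t + 1)) := by
    simpa using endpointBound_Pt_sub (N := N) ht (by linarith : t / 2 ≤ t + 1) 0
  unfold discrepancyWeight discrepancyKernel
  split_ifs with hτt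
  · rcases min_choice 2 (ENNReal.ofReal
      (comparisonFactor N ((t + 1) / (t - τ)) (‖y‖ / (t + 1)) - 1)) with h | h <;> rw [h]
    · rw [two_mul]
      exact (endpointBound_Pt_sub ht (by linarith) y).sub hprofile
        ((continuous_Pt N _).comp (by fun_prop)).aestronglyMeasurable
    · refine hprofile.of_enorm_le_mul ENNReal.ofReal_ne_top fun x ↦ ?_
      rw [Real.enorm_eq_ofReal_abs, enorm_Pt (by linarith),
        ← ENNReal.ofReal_mul' (Pt_pos (by linarith) x).le]
      exact ENNReal.ofReal_le_ofReal (abs_Pt_sub_Pt_le (by linarith) (by linarith) x y)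
  · simpa using! hprofile.neg

lemma measurable_discrepancyKernel (N : ℕ) (t : ℝ) :
    Measurable fun z : ℝ × EuclideanSpace ℝ (Fin N) × EuclideanSpace ℝ (Fin N) ↦
      discrepancyKernel N t z.1 z.2.1 z.2.2 := by
  unfold discrepancyKernel
  have hkernel : Measurable fun z : ℝ × EuclideanSpace ℝ (Fin N) × EuclideanSpace ℝ (Fin N) ↦
      Pt N (t - z.1) (z.2.1 - z.2.2) :=
    (measurable_uncurry_Pt N).comp (by fun_prop :
      Measurable fun z : ℝ × EuclideanSpace ℝ (Fin N) × EuclideanSpace ℝ (Fin N) ↦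
        (t - z.1, z.2.1 - z.2.2))
  have hprofile : Measurable fun z : ℝ × EuclideanSpace ℝ (Fin N) × EuclideanSpace ℝ (Fin N) ↦
      Pt N (t + 1) z.2.1 :=
    (continuous_Pt N _).measurable.comp (measurable_fst.comp measurable_snd)
  exact (hkernel.ite (measurableSet_lt measurable_fst measurable_const) measurable_const).sub
    hprofile

lemma discrepancyWeight_le (t τ : ℝ) (y : EuclideanSpace ℝ (Fin N)) :
    discrepancyWeight N t τ y ≤ 2 * kernelConst N := by
  unfold discrepancyWeight
  split_ifs
  · grw [min_le_left]
  · exact le_mul_of_one_le_left zero_le one_le_two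

lemma measurable_uncurry_discrepancyWeight (N : ℕ) (t : ℝ) :
    Measurable (discrepancyWeight N t).uncurry := by
  refine Measurable.ite (measurableSet_lt measurable_fst measurable_const)
    ((measurable_const.min (Measurable.ennreal_ofReal (.sub_const ?_ _))).mul_const _)
    measurable_const
  exact (continuous_uncurry_comparisonFactor N).measurable.comp
    (f := fun z : ℝ × EuclideanSpace ℝ (Fin N) ↦ ((t + 1) / (t - z.1), ‖z.2‖ / (t + 1)))
    (by fun_prop)

lemma continuous_discrepancyWeight (N : ℕ) (t τ : ℝ) : Continuous (discrepancyWeight N t τ) := by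
  unfold discrepancyWeight
  split_ifs
  · refine ENNReal.continuous_mul_const (kernelConst_ne_top N) |>.comp <|
      continuous_const.min (ENNReal.continuous_ofReal.comp (.sub ?_ continuous_const))
    exact (continuous_uncurry_comparisonFactor N).comp
      (f := fun y : EuclideanSpace ℝ (Fin N) ↦ ((t + 1) / (t - τ), ‖y‖ / (t + 1))) (by fun_prop)
  · exact continuous_const

lemma tendsto_discrepancyWeight (τ : ℝ) (y : EuclideanSpace ℝ (Fin N)) :
    Tendsto (fun t ↦ discrepancyWeight N t τ y) atTop (𝓝 0) := by
  have hratio : Tendsto (fun t : ℝ ↦ (t + 1) / (t - τ)) atTop (𝓝 1) := by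
    have h : Tendsto (fun t : ℝ ↦ 1 + (1 + τ) / (t - τ)) atTop (𝓝 (1 + 0)) :=
      tendsto_const_nhds.add
        (tendsto_const_nhds.div_atTop (tendsto_atTop_add_const_right _ (-τ) tendsto_id))
    rw [add_zero] at h
    refine h.congr' ?_
    filter_upwards [eventually_gt_atTop τ] with t ht
    have : t - τ ≠ 0 := by linarith
    field_simp
    ring
  have hnorm : Tendsto (fun t : ℝ ↦ ‖y‖ / (t + 1)) atTop (𝓝 0) :=
    tendsto_const_nhds.div_atTop (tendsto_atTop_add_const_right _ _ tendsto_id)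
  have hfactor : Tendsto (fun t : ℝ ↦ ENNReal.ofReal
      (comparisonFactor N ((t + 1) / (t - τ)) (‖y‖ / (t + 1)) - 1)) atTop (𝓝 0) := by
    have h := ((continuous_uncurry_comparisonFactor N).tendsto (1, 0)).comp
      (hratio.prodMk_nhds hnorm)
    simpa [comparisonFactor_one_zero] using ENNReal.tendsto_ofReal (h.sub_const 1)
  have hmul : Tendsto (fun t : ℝ ↦ ENNReal.ofReal
      (comparisonFactor N ((t + 1) / (t - τ)) (‖y‖ / (t + 1)) - 1) * kernelConst N)
      atTop (𝓝 0) := by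
    simpa using ENNReal.Tendsto.mul_const hfactor (.inr (kernelConst_ne_top N))
  refine tendsto_of_tendsto_of_tendsto_of_le_of_le' tendsto_const_nhds hmul
    (.of_forall fun _ ↦ zero_le) ?_
  filter_upwards [eventually_gt_atTop (2 * τ)] with t ht
  rw [discrepancyWeight, if_pos (by linarith)]
  grw [min_le_right]

lemma endpointBound_integral_discrepancyKernel_mul (ht : 0 < t) (hτ : 0 ≤ τ)
    {f : EuclideanSpace ℝ (Fin N) → ℝ} (hf : AEStronglyMeasurable f) :
    EndpointBound volume (ENNReal.ofReal (t ^ (-(N : ℝ))))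
      (∫⁻ y, discrepancyWeight N t τ y * ‖f y‖ₑ)
      fun x ↦ ∫ y, discrepancyKernel N t τ x y * f y := by
  refine .integral (F := fun y x ↦ discrepancyKernel N t τ x y * f y) ?_
    (ae_of_all _ fun y ↦ ?_) ENNReal.ofReal_ne_top
  · exact (((measurable_discrepancyKernel N t).comp
      (f := fun z : _ × _ ↦ (τ, z.2, z.1)) (by fun_prop)).aestronglyMeasurable).mul hf.comp_fst
  · rw [mul_comm]
    refine (endpointBound_discrepancyKernel ht hτ y).of_enorm_le_mul enorm_ne_top fun x ↦ ?_
    rw [enorm_mul, mul_comm]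

lemma tendsto_lintegral_discrepancyWeight_mul (τ : ℝ) {f : EuclideanSpace ℝ (Fin N) → ℝ≥0∞}
    (hf : AEMeasurable f) (hf_ne_top : ∫⁻ y, f y ≠ ⊤) :
    Tendsto (fun t ↦ ∫⁻ y, discrepancyWeight N t τ y * f y) atTop (𝓝 0) := by
  have h_ae : ∀ᵐ y, f y ≠ ⊤ := (ae_lt_top' hf hf_ne_top).mono fun _ h ↦ h.ne
  rw [← lintegral_zero (μ := (volume : Measure (EuclideanSpace ℝ (Fin N))))]
  refine tendsto_lintegral_filter_of_dominated_convergence' (fun y ↦ 2 * kernelConst N * f y)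
    (.of_forall fun t ↦ ?_) (.of_forall fun t ↦ ae_of_all _ fun y ↦ ?_) ?_ ?_
  · exact (continuous_discrepancyWeight N t τ).aemeasurable.mul hf
  · grw [discrepancyWeight_le]
  · rw [lintegral_const_mul'' _ hf]
    exact ENNReal.mul_ne_top (ENNReal.mul_ne_top ofNat_ne_top (kernelConst_ne_top N)) hf_ne_top
  · filter_upwards [h_ae] with y hy
    simpa using ENNReal.Tendsto.mul_const (tendsto_discrepancyWeight τ y) (.inr hy)

end DiscrepancyKernel

section PoissonConv

variable {N : ℕ} {s : ℝ} {f : EuclideanSpace ℝ (Fin N) → ℝ}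

/-- The Poisson extension `P_s * f` of `f`, at height `s`. -/
noncomputable def poissonConv (N : ℕ) (s : ℝ) (f : EuclideanSpace ℝ (Fin N) → ℝ)
    (x : EuclideanSpace ℝ (Fin N)) : ℝ :=
  ∫ y, Pt N s (x - y) * f y

lemma continuous_Pt_sub_left (N : ℕ) (s : ℝ) (x : EuclideanSpace ℝ (Fin N)) :
    Continuous fun y ↦ Pt N s (x - y) :=
  (continuous_Pt N s).comp (by fun_prop)

lemma integrable_Pt_sub_mul (hs : 0 < s) (hf : Integrable f) (x : EuclideanSpace ℝ (Fin N)) :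
    Integrable fun y ↦ Pt N s (x - y) * f y :=
  hf.bdd_mul (continuous_Pt_sub_left N s x).aestronglyMeasurable <|
    ae_of_all _ fun _ ↦ (Real.norm_of_nonneg (Pt_pos hs _).le).trans_le (Pt_le hs _)

lemma continuousAt_uncurry_poissonConv (hs : 0 < s) (hf : Integrable f)
    (x : EuclideanSpace ℝ (Fin N)) :
    ContinuousAt (fun z : ℝ × EuclideanSpace ℝ (Fin N) ↦ poissonConv N z.1 f z.2) (s, x) := by
  refine continuousAt_of_dominated (bound := fun y ↦ cN N * (s / 2) ^ (-(N : ℝ)) * ‖f y‖)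
    (.of_forall fun z ↦ (continuous_Pt_sub_left N z.1 z.2).aestronglyMeasurable.mul hf.1) ?_
    (hf.norm.const_mul _) (ae_of_all _ fun y ↦ ?_)
  · filter_upwards [continuousAt_fst.eventually (lt_mem_nhds (half_lt_self hs))] with z hz
    have hz_pos : 0 < z.1 := (half_pos hs).trans hz
    refine ae_of_all _ fun y ↦ ?_
    rw [norm_mul, Real.norm_of_nonneg (Pt_pos hz_pos _).le]
    have := cN_pos N
    grw [Pt_le hz_pos, Real.rpow_le_rpow_of_nonpos (half_pos hs) hz.le (by simp)]
  · exact ((continuousAt_uncurry_Pt hs (x - y)).comp (x := (s, x))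
      (f := fun z : ℝ × EuclideanSpace ℝ (Fin N) ↦ (z.1, z.2 - y)) (by fun_prop)).mul
      continuousAt_const

lemma continuous_poissonConv (hs : 0 < s) (hf : Integrable f) : Continuous (poissonConv N s f) :=
  continuous_iff_continuousAt.2 fun x ↦ (continuousAt_uncurry_poissonConv hs hf x).comp
    (f := fun x ↦ (s, x)) (by fun_prop)

lemma poissonConv_nonneg (hs : 0 < s) (hf : 0 ≤ f) (x : EuclideanSpace ℝ (Fin N)) :
    0 ≤ poissonConv N s f x :=
  integral_nonneg fun y ↦ mul_nonneg (Pt_pos hs _).le (hf y)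

lemma poissonConv_eq_zero_iff (hs : 0 < s) (hf : Integrable f) (hf_nonneg : 0 ≤ f)
    (x : EuclideanSpace ℝ (Fin N)) : poissonConv N s f x = 0 ↔ f =ᵐ[volume] 0 := by
  rw [poissonConv, integral_eq_zero_iff_of_nonneg
    (fun y ↦ mul_nonneg (Pt_pos hs _).le (hf_nonneg y)) (integrable_Pt_sub_mul hs hf x)]
  exact eventually_congr (ae_of_all _ fun y ↦ by simp [(Pt_pos hs (x - y)).ne'])

lemma ofReal_poissonConv (hs : 0 < s) (hf : Integrable f) (hf_nonneg : 0 ≤ f)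
    (x : EuclideanSpace ℝ (Fin N)) :
    ENNReal.ofReal (poissonConv N s f x) =
      ∫⁻ y, ENNReal.ofReal (Pt N s (x - y)) * ENNReal.ofReal (f y) := by
  rw [poissonConv, ofReal_integral_eq_lintegral_ofReal (integrable_Pt_sub_mul hs hf x)
    (ae_of_all _ fun y ↦ mul_nonneg (Pt_pos hs _).le (hf_nonneg y))]
  simp_rw [ENNReal.ofReal_mul (Pt_pos hs _).le]

lemma enorm_poissonConv_le_lintegral (hs : 0 < s) (f : EuclideanSpace ℝ (Fin N) → ℝ)
    (x : EuclideanSpace ℝ (Fin N)) :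
    ‖poissonConv N s f x‖ₑ ≤ ∫⁻ y, ENNReal.ofReal (Pt N s (x - y)) * ‖f y‖ₑ := by
  simpa only [poissonConv, enorm_mul, enorm_Pt hs] using
    enorm_integral_le_lintegral_enorm fun y ↦ Pt N s (x - y) * f y

lemma enorm_poissonConv_le (hs : 0 < s) {C : ℝ≥0∞} (hf : ∀ᵐ y, ‖f y‖ₑ ≤ C)
    (x : EuclideanSpace ℝ (Fin N)) : ‖poissonConv N s f x‖ₑ ≤ poissonMass N * C := calc
  ‖poissonConv N s f x‖ₑ ≤ ∫⁻ y, ENNReal.ofReal (Pt N s (x - y)) * C :=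
    (enorm_poissonConv_le_lintegral hs f x).trans
      (lintegral_mono_ae (hf.mono fun y hy ↦ by gcongr))
  _ = poissonMass N * C := by
    rw [lintegral_mul_const _ (continuous_Pt_sub_left N s x).measurable.ennreal_ofReal,
      lintegral_Pt_sub_right hs]

lemma measurable_ofReal_Pt_sub (N : ℕ) (s : ℝ) :
    Measurable fun z : EuclideanSpace ℝ (Fin N) × EuclideanSpace ℝ (Fin N) ↦
      ENNReal.ofReal (Pt N s (z.1 - z.2)) :=
  ((continuous_Pt N s).measurable.comp (measurable_fst.sub measurable_snd)).ennreal_ofReal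

lemma lintegral_mul_lintegral_Pt_sub_mul (N : ℕ) (s : ℝ)
    {φ ψ : EuclideanSpace ℝ (Fin N) → ℝ≥0∞} (hφ : AEMeasurable φ) (hψ : AEMeasurable ψ) :
    ∫⁻ x, ψ x * ∫⁻ y, ENNReal.ofReal (Pt N s (x - y)) * φ y =
      ∫⁻ y, (∫⁻ x, ENNReal.ofReal (Pt N s (x - y)) * ψ x) * φ y := by
  have hPt := measurable_ofReal_Pt_sub N s
  calc ∫⁻ x, ψ x * ∫⁻ y, ENNReal.ofReal (Pt N s (x - y)) * φ y
      = ∫⁻ x, ∫⁻ y, ψ x * (ENNReal.ofReal (Pt N s (x - y)) * φ y) := by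
        refine lintegral_congr fun x ↦ (lintegral_const_mul'' _ ?_).symm
        exact (hPt.comp measurable_prodMk_left).aemeasurable.mul hφ
    _ = ∫⁻ y, ∫⁻ x, ψ x * (ENNReal.ofReal (Pt N s (x - y)) * φ y) :=
        lintegral_lintegral_swap (hψ.comp_fst.mul (hPt.aemeasurable.mul hφ.comp_snd))
    _ = ∫⁻ y, (∫⁻ x, ENNReal.ofReal (Pt N s (x - y)) * ψ x) * φ y := by
        refine lintegral_congr fun y ↦ .trans ?_ (lintegral_mul_const'' _
          ((hPt.comp measurable_prodMk_right).aemeasurable.mul hψ))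
        exact lintegral_congr fun x ↦ (mul_left_comm ..).trans (mul_assoc ..).symm

lemma endpointBound_poissonConv (hs : 0 < s) {T ε : ℝ≥0∞} (hf : AEStronglyMeasurable f)
    (h_sup : ∀ᵐ y, ‖f y‖ₑ ≤ ε * T) (h_int : ∫⁻ y, ‖f y‖ₑ ≤ ε) :
    EndpointBound volume T (poissonMass N * ε) (poissonConv N s f) := by
  refine ⟨fun x ↦ (enorm_poissonConv_le hs h_sup x).trans_eq (mul_assoc ..).symm, ?_⟩
  calc ∫⁻ x, ‖poissonConv N s f x‖ₑ
      ≤ ∫⁻ x, 1 * ∫⁻ y, ENNReal.ofReal (Pt N s (x - y)) * ‖f y‖ₑ := by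
        simpa only [one_mul] using lintegral_mono (enorm_poissonConv_le_lintegral hs f)
    _ = poissonMass N * ∫⁻ y, ‖f y‖ₑ := by
        rw [lintegral_mul_lintegral_Pt_sub_mul N s hf.enorm aemeasurable_const]
        simp_rw [mul_one, lintegral_Pt_sub_left hs]
        exact lintegral_const_mul'' _ hf.enorm
    _ ≤ poissonMass N * ε := by gcongr

lemma lintegral_Pt_sub_mul_le (hs : 0 < s) {ψ : EuclideanSpace ℝ (Fin N) → ℝ≥0∞} {C : ℝ≥0∞}
    (hC : C ≠ ⊤) (hψC : ∀ x, ψ x ≤ C) (y : EuclideanSpace ℝ (Fin N)) :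
    ∫⁻ x, ENNReal.ofReal (Pt N s (x - y)) * ψ x ≤ poissonMass N * C := by
  rw [← lintegral_Pt_sub_left hs y, ← lintegral_mul_const' _ _ hC]
  gcongr
  exact hψC _

lemma measurable_lintegral_Pt_sub_mul (N : ℕ) (s : ℝ) {ψ : EuclideanSpace ℝ (Fin N) → ℝ≥0∞}
    (hψ : Measurable ψ) : Measurable fun y ↦ ∫⁻ x, ENNReal.ofReal (Pt N s (x - y)) * ψ x :=
  (measurable_ofReal_Pt_sub N s |>.mul (hψ.comp measurable_fst)).lintegral_prod_left'

lemma tendsto_lintegral_Pt_sub_mul {ψ : EuclideanSpace ℝ (Fin N) → ℝ≥0∞} (hψ : Continuous ψ)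
    {C : ℝ≥0∞} (hC : C ≠ ⊤) (hψC : ∀ x, ψ x ≤ C) (y : EuclideanSpace ℝ (Fin N)) :
    Tendsto (fun s ↦ ∫⁻ x, ENNReal.ofReal (Pt N s (x - y)) * ψ x) (𝓝[>] 0)
      (𝓝 (poissonMass N * ψ y)) := by
  have hP : Measurable fun z ↦ ENNReal.ofReal (P N z) := (continuous_P N).measurable.ennreal_ofReal
  rw [poissonMass, ← lintegral_mul_const _ hP]
  refine Tendsto.congr' (eventually_mem_nhdsWithin.mono fun s hs ↦
    (lintegral_Pt_sub_mul hs y ψ).symm) ?_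
  refine tendsto_lintegral_filter_of_dominated_convergence (fun z ↦ ENNReal.ofReal (P N z) * C)
    (.of_forall fun s ↦ hP.mul (hψ.comp (by fun_prop)).measurable)
    (.of_forall fun s ↦ ae_of_all _ fun z ↦ by gcongr; exact hψC _) ?_ (ae_of_all _ fun z ↦ ?_)
  · rw [lintegral_mul_const _ hP]
    exact ENNReal.mul_ne_top (poissonMass_ne_top N) hC
  · refine ENNReal.Tendsto.const_mul (tendsto_nhdsWithin_of_tendsto_nhds ?_)
      (.inr ENNReal.ofReal_ne_top)
    exact (hψ.comp (by fun_prop : Continuous fun s : ℝ ↦ y + s • z)).tendsto' 0 _ (by simp)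

lemma tendsto_lintegral_mul_poissonConv (hf : Integrable f) (hf_nonneg : 0 ≤ f)
    {ψ : EuclideanSpace ℝ (Fin N) → ℝ≥0∞} (hψ : Continuous ψ) {C : ℝ≥0∞} (hC : C ≠ ⊤)
    (hψC : ∀ x, ψ x ≤ C) :
    Tendsto (fun s ↦ ∫⁻ x, ψ x * ENNReal.ofReal (poissonConv N s f x)) (𝓝[>] 0)
      (𝓝 (poissonMass N * ∫⁻ y, ψ y * ENNReal.ofReal (f y))) := by
  have hf' : AEMeasurable fun y ↦ ENNReal.ofReal (f y) := hf.1.aemeasurable.ennreal_ofReal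
  have hswap {s : ℝ} (hs : 0 < s) : ∫⁻ x, ψ x * ENNReal.ofReal (poissonConv N s f x) =
      ∫⁻ y, (∫⁻ x, ENNReal.ofReal (Pt N s (x - y)) * ψ x) * ENNReal.ofReal (f y) := by
    simp_rw [ofReal_poissonConv hs hf hf_nonneg]
    exact lintegral_mul_lintegral_Pt_sub_mul N s hf' hψ.aemeasurable
  have hlimit : poissonMass N * ∫⁻ y, ψ y * ENNReal.ofReal (f y) =
      ∫⁻ y, poissonMass N * ψ y * ENNReal.ofReal (f y) := by
    simp_rw [mul_assoc]
    exact (lintegral_const_mul'' _ (hψ.aemeasurable.mul hf')).symm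
  rw [hlimit]
  refine Tendsto.congr' (eventually_mem_nhdsWithin.mono fun s hs ↦ (hswap hs).symm) ?_
  refine tendsto_lintegral_filter_of_dominated_convergence'
    (fun y ↦ poissonMass N * C * ENNReal.ofReal (f y)) (.of_forall fun s ↦ ?_) ?_ ?_
    (ae_of_all _ fun y ↦ ENNReal.Tendsto.mul_const (tendsto_lintegral_Pt_sub_mul hψ hC hψC y)
      (.inr ENNReal.ofReal_ne_top))
  · exact (measurable_lintegral_Pt_sub_mul N s hψ.measurable).aemeasurable.mul hf'
  · filter_upwards [eventually_mem_nhdsWithin] with s hs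
    exact ae_of_all _ fun y ↦ by gcongr; exact lintegral_Pt_sub_mul_le hs hC hψC y
  · rw [lintegral_const_mul'' _ hf']
    exact ENNReal.mul_ne_top (ENNReal.mul_ne_top (poissonMass_ne_top N) hC)
      hf.lintegral_lt_top.ne

end PoissonConv

section WeakMeasurability

variable {N : ℕ} {t : ℝ} {g G : ℝ → EuclideanSpace ℝ (Fin N) → ℝ}

/-- The integrand `τ ↦ (P_{t-τ} * g τ)(x)` of the Duhamel integral over `(0, t)` is measurable for
every `x`. -/
def IsDuhamelMeasurable (N : ℕ) (g : ℝ → EuclideanSpace ℝ (Fin N) → ℝ) (t : ℝ) : Prop :=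
  ∀ x, AEStronglyMeasurable (fun τ ↦ poissonConv N (t - τ) (g τ) x) (volume.restrict (Set.Ioo 0 t))

/-- Measurability of the family of measures `g τ y dy`, `τ > 0`, tested against time-dependent
bounded continuous functions. Joint measurability of `g` is not available in the applications. -/
def IsWeaklyMeasurable (N : ℕ) (g : ℝ → EuclideanSpace ℝ (Fin N) → ℝ) : Prop :=
  ∀ ψ : ℝ → EuclideanSpace ℝ (Fin N) → ℝ≥0∞, Measurable ψ.uncurry → (∀ τ, Continuous (ψ τ)) →
    (∀ τ, ∃ C ≠ ⊤, ∀ y, ψ τ y ≤ C) →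
    AEMeasurable (fun τ ↦ ∫⁻ y, ψ τ y * ENNReal.ofReal (g τ y)) (volume.restrict (Set.Ioi 0))

lemma IsDuhamelMeasurable.aestronglyMeasurable_uncurry (h : IsDuhamelMeasurable N g t)
    (hg : ∀ τ > 0, Integrable (g τ)) :
    AEStronglyMeasurable
      (fun z : ℝ × EuclideanSpace ℝ (Fin N) ↦ poissonConv N (t - z.1) (g z.1) z.2)
      ((volume.restrict (Set.Ioo 0 t)).prod volume) := by
  refine aestronglyMeasurable_uncurry_of_ae_continuous
    (u := fun τ x ↦ poissonConv N (t - τ) (g τ) x) ?_ h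
  filter_upwards [ae_restrict_mem measurableSet_Ioo] with τ hτ
  exact continuous_poissonConv (sub_pos.2 hτ.2) (hg τ hτ.1)

lemma aemeasurable_lintegral_mul_ofReal_closure (hg : ∀ τ > 0, Integrable (g τ))
    (hg_nonneg : 0 ≤ g) {ψ : ℝ → EuclideanSpace ℝ (Fin N) → ℝ≥0∞} (hψ : Measurable ψ.uncurry)
    (hψ_cont : ∀ τ, Continuous (ψ τ)) (hψ_le : ∀ τ, ∃ C ≠ ⊤, ∀ y, ψ τ y ≤ C) :
    AEMeasurable (fun τ ↦ ∫⁻ y, ψ τ y * ENNReal.ofReal (g τ y))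
      ((volume.restrict (Set.Ioi 0)).restrict (closure {t | IsDuhamelMeasurable N g t})) := by
  have hmass : AEMeasurable (fun τ ↦ poissonMass N * ∫⁻ y, ψ τ y * ENNReal.ofReal (g τ y))
      ((volume.restrict (Set.Ioi 0)).restrict (closure {t | IsDuhamelMeasurable N g t})) := by
    refine aemeasurable_closure_of_tendsto_right
      (F := fun t τ ↦ ∫⁻ x, ψ τ x * ENNReal.ofReal (poissonConv N (t - τ) (g τ) x))
      (fun t ht ↦ ?_) ?_
    · rw [Measure.restrict_restrict measurableSet_Iio, Set.Iio_inter_Ioi]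
      exact (hψ.aemeasurable.mul
        (ht.aestronglyMeasurable_uncurry hg).aemeasurable.ennreal_ofReal).lintegral_prod_right'
    · filter_upwards [ae_restrict_mem measurableSet_Ioi] with τ hτ
      obtain ⟨C, hC, hψC⟩ := hψ_le τ
      refine (tendsto_lintegral_mul_poissonConv (hg τ hτ) (hg_nonneg τ) (hψ_cont τ) hC hψC).comp ?_
      refine tendsto_nhdsWithin_iff.2 ⟨?_, ?_⟩
      · exact ((continuous_sub_right τ).tendsto' τ 0 (sub_self τ)).mono_left nhdsWithin_le_nhds
      · exact eventually_mem_nhdsWithin.mono fun t ht ↦ Set.mem_Ioi.2 (sub_pos.2 ht.2)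
  refine (hmass.const_mul (poissonMass N)⁻¹).congr (ae_of_all _ fun τ ↦ ?_)
  simp only
  rw [← mul_assoc, ENNReal.inv_mul_cancel (poissonMass_ne_zero N) (poissonMass_ne_top N), one_mul]

-- On the closure of the set of times `t` at which the Duhamel integrand is measurable, `g τ` is the
-- weak limit of `P_{t-τ} * g τ` as `t ↓ τ`; elsewhere it is given by `G`.
lemma isWeaklyMeasurable_of_forall_or_eq (hg : ∀ τ > 0, Integrable (g τ)) (hg_nonneg : 0 ≤ g)
    (hG : Measurable G.uncurry) (h : ∀ t > 0, IsDuhamelMeasurable N g t ∨ g t = G t) :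
    IsWeaklyMeasurable N g := by
  intro ψ hψ hψ_cont hψ_le
  rw [← Measure.restrict_univ (μ := volume.restrict (Set.Ioi 0)),
    ← Set.union_compl_self (closure {t | IsDuhamelMeasurable N g t}), aemeasurable_union_iff]
  have hψG : Measurable fun τ ↦ ∫⁻ y, ψ τ y * ENNReal.ofReal (G τ y) :=
    (hψ.mul hG.ennreal_ofReal).lintegral_prod_right'
  refine ⟨aemeasurable_lintegral_mul_ofReal_closure hg hg_nonneg hψ hψ_cont hψ_le,
    hψG.aemeasurable.congr ?_⟩
  filter_upwards [ae_restrict_mem isClosed_closure.measurableSet.compl,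
    ae_restrict_of_ae (ae_restrict_mem measurableSet_Ioi)] with τ hτ_closure hτ
  have hgG : g τ = G τ := (h τ hτ).resolve_left fun h' ↦ hτ_closure (subset_closure h')
  simp only [hgG]

namespace IsWeaklyMeasurable

lemma aemeasurable_lintegral (h : IsWeaklyMeasurable N g) :
    AEMeasurable (fun τ ↦ ∫⁻ y, ENNReal.ofReal (g τ y)) (volume.restrict (Set.Ioi 0)) := by
  simpa using h (fun _ _ ↦ 1) measurable_const (fun _ ↦ continuous_const)
    fun _ ↦ ⟨1, one_ne_top, fun _ ↦ le_rfl⟩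

lemma isDuhamelMeasurable (h : IsWeaklyMeasurable N g) (hg : ∀ τ > 0, Integrable (g τ))
    (hg_nonneg : 0 ≤ g) (t : ℝ) : IsDuhamelMeasurable N g t := by
  intro x
  have htest := h
    (fun τ y ↦ if τ < t then ENNReal.ofReal (Pt N (t - τ) (x - y)) else 0) ?_ ?_ ?_
  · refine (htest.mono_measure
      (Measure.restrict_mono_set _ Set.Ioo_subset_Ioi_self)).ennreal_toReal.aestronglyMeasurable
      |>.congr ?_
    filter_upwards [ae_restrict_mem measurableSet_Ioo] with τ hτ
    have hs : 0 < t - τ := sub_pos.2 hτ.2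
    simp only [if_pos hτ.2]
    rw [← ofReal_poissonConv hs (hg τ hτ.1) (hg_nonneg τ),
      ENNReal.toReal_ofReal (poissonConv_nonneg hs (hg_nonneg τ) x)]
  · refine .ite (measurableSet_lt measurable_fst measurable_const) ?_ measurable_const
    exact ((measurable_uncurry_Pt N).comp
      (f := fun z : ℝ × EuclideanSpace ℝ (Fin N) ↦ (t - z.1, x - z.2)) (by fun_prop)).ennreal_ofReal
  · intro τ
    split_ifs
    exacts [ENNReal.continuous_ofReal.comp (continuous_Pt_sub_left N _ x), continuous_const]
  · intro τ
    refine ⟨ENNReal.ofReal (cN N * (t - τ) ^ (-(N : ℝ))), ENNReal.ofReal_ne_top, fun y ↦ ?_⟩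
    split_ifs with hτ
    exacts [ENNReal.ofReal_le_ofReal (Pt_le (sub_pos.2 hτ) _), zero_le]

end IsWeaklyMeasurable

end WeakMeasurability

section Duhamel

variable {N : ℕ} {A b t τ : ℝ} {g : ℝ → EuclideanSpace ℝ (Fin N) → ℝ}

/-- A nonnegative source term `g` with `‖g τ‖_1 ≤ A (1 + τ)^{-b}` and
`‖g τ‖_∞ ≤ A (1 + τ)^{-(b + N)}` for all `τ > 0`. -/
structure IsDecayingSource (N : ℕ) (A b : ℝ) (g : ℝ → EuclideanSpace ℝ (Fin N) → ℝ) : Prop where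
  nonneg : 0 ≤ g
  aestronglyMeasurable : ∀ τ > 0, AEStronglyMeasurable (g τ)
  ae_le : ∀ τ > 0, ∀ᵐ y, g τ y ≤ A * (1 + τ) ^ (-(b + N))
  lintegral_le : ∀ τ > 0, ∫⁻ y, ENNReal.ofReal (g τ y) ≤ ENNReal.ofReal (A * (1 + τ) ^ (-b))

/-- The size, in the sense of `EndpointBound`, of the difference between the Duhamel integral over
`(0, t)` and its limit profile: the sources emitted before and after time `t / 2` contribute the
first and the second term. -/
noncomputable def duhamelError (N : ℕ) (A b : ℝ) (g : ℝ → EuclideanSpace ℝ (Fin N) → ℝ) (t : ℝ) :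
    ℝ≥0∞ :=
  (∫⁻ τ in Set.Ioi 0, ∫⁻ y, discrepancyWeight N t τ y * ENNReal.ofReal (g τ y)) +
    poissonMass N * ENNReal.ofReal (2 ^ N * (A * (1 + t / 2) ^ (-b))) * ENNReal.ofReal (t / 2)

lemma integral_discrepancyKernel_mul (ht : 0 < t) {f : EuclideanSpace ℝ (Fin N) → ℝ}
    (hf : Integrable f) (x : EuclideanSpace ℝ (Fin N)) :
    ∫ y, discrepancyKernel N t τ x y * f y =
      (if τ < t / 2 then poissonConv N (t - τ) f x else 0) - (∫ y, f y) * Pt N (t + 1) x := by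
  unfold discrepancyKernel
  split_ifs with hτ
  · simp_rw [sub_mul]
    rw [integral_sub (integrable_Pt_sub_mul (by linarith) hf x) (hf.const_mul _),
      integral_const_mul, mul_comm (∫ y, f y), poissonConv]
  · simp_rw [zero_sub, neg_mul]
    rw [integral_neg, integral_const_mul, mul_comm]

lemma integrableOn_one_add_rpow_neg (hb : 1 < b) :
    IntegrableOn (fun τ : ℝ ↦ (1 + τ) ^ (-b)) (Set.Ioi 0) := by
  simpa only [add_comm] using
    integrableOn_add_rpow_Ioi_of_lt (a := -b) (c := 0) (m := 1) (by linarith) (by norm_num)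

lemma tendsto_mul_one_add_half_rpow_neg (hb : 1 < b) :
    Tendsto (fun t : ℝ ↦ (1 + t / 2) ^ (-b) * (t / 2)) atTop (𝓝 0) := by
  have hhalf : Tendsto (fun t : ℝ ↦ 1 + t / 2) atTop atTop :=
    tendsto_atTop_add_const_left _ _ (tendsto_id.atTop_div_const two_pos)
  refine squeeze_zero' ?_ ?_ ((tendsto_rpow_neg_atTop (sub_pos.2 hb)).comp hhalf)
  · filter_upwards [eventually_ge_atTop 0] with t ht
    positivity
  · filter_upwards [eventually_ge_atTop 0] with t ht
    calc (1 + t / 2) ^ (-b) * (t / 2) ≤ (1 + t / 2) ^ (-b) * (1 + t / 2) := by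
          gcongr
          linarith
      _ = (1 + t / 2) ^ (-(b - 1)) := by
          rw [neg_sub', sub_neg_eq_add, Real.rpow_add_one (by positivity)]

namespace IsDecayingSource

lemma const_nonneg (hg : IsDecayingSource N A b g) : 0 ≤ A := by
  obtain ⟨y, hy⟩ := (hg.ae_le 1 one_pos).exists
  exact nonneg_of_mul_nonneg_left ((hg.nonneg 1 y).trans hy) (by positivity)

lemma enorm_apply (hg : IsDecayingSource N A b g) (τ : ℝ) (y : EuclideanSpace ℝ (Fin N)) :
    ‖g τ y‖ₑ = ENNReal.ofReal (g τ y) :=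
  Real.enorm_of_nonneg (hg.nonneg τ y)

lemma integrable (hg : IsDecayingSource N A b g) (hτ : 0 < τ) : Integrable (g τ) := by
  refine ⟨hg.aestronglyMeasurable τ hτ, ?_⟩
  simp_rw [HasFiniteIntegral, hg.enorm_apply]
  exact (hg.lintegral_le τ hτ).trans_lt ENNReal.ofReal_lt_top

lemma ae_enorm_le (hg : IsDecayingSource N A b g) (hb : 0 ≤ b) (hτ : 0 < τ) :
    ∀ᵐ y, ‖g τ y‖ₑ ≤ ENNReal.ofReal A := by
  filter_upwards [hg.ae_le τ hτ] with y hy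
  rw [hg.enorm_apply]
  refine ENNReal.ofReal_le_ofReal (hy.trans (mul_le_of_le_one_right hg.const_nonneg ?_))
  exact Real.rpow_le_one_of_one_le_of_nonpos (by linarith) (neg_nonpos.2 (by positivity))

lemma poissonConv_le (hg : IsDecayingSource N A b g) (hb : 0 ≤ b) (hτ : τ ∈ Set.Ioo 0 t)
    (x : EuclideanSpace ℝ (Fin N)) :
    poissonConv N (t - τ) (g τ) x ≤ (poissonMass N * ENNReal.ofReal A).toReal := by
  rw [← ENNReal.ofReal_le_iff_le_toReal
    (ENNReal.mul_ne_top (poissonMass_ne_top N) ENNReal.ofReal_ne_top),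
    ← Real.enorm_of_nonneg (poissonConv_nonneg (sub_pos.2 hτ.2) (hg.nonneg τ) x)]
  exact enorm_poissonConv_le (sub_pos.2 hτ.2) (hg.ae_enorm_le hb hτ.1) x

lemma isDuhamelMeasurable_or_eq_zero (hg : IsDecayingSource N A b g) (hb : 0 ≤ b) (ht : 0 < t)
    {w : EuclideanSpace ℝ (Fin N) → ℝ} (hw : Continuous w)
    (hwg : ∀ᵐ x, w x = ∫ τ in (0 : ℝ)..t, poissonConv N (t - τ) (g τ) x) :
    IsDuhamelMeasurable N g t ∨ w = 0 := by
  simp_rw [intervalIntegral.integral_of_le ht.le, integral_Ioc_eq_integral_Ioo] at hwg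
  refine forall_aestronglyMeasurable_or_eq_zero (u := fun τ x ↦ poissonConv N (t - τ) (g τ) x)
    ?_ ?_ (integrable_const (poissonMass N * ENNReal.ofReal A).toReal) ?_ ?_ hw hwg <;>
  filter_upwards [ae_restrict_mem measurableSet_Ioo] with τ hτ
  · exact continuous_poissonConv (sub_pos.2 hτ.2) (hg.integrable hτ.1)
  · exact poissonConv_nonneg (sub_pos.2 hτ.2) (hg.nonneg τ)
  · exact hg.poissonConv_le hb hτ
  · intro x y hx
    have hiff := poissonConv_eq_zero_iff (sub_pos.2 hτ.2) (hg.integrable hτ.1) (hg.nonneg τ)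
    exact (hiff y).2 ((hiff x).1 hx)

lemma lintegral_lintegral_ne_top (hg : IsDecayingSource N A b g) (hb : 1 < b) :
    ∫⁻ τ in Set.Ioi 0, ∫⁻ y, ENNReal.ofReal (g τ y) ≠ ⊤ :=
  ((setLIntegral_mono' measurableSet_Ioi hg.lintegral_le).trans_lt
    ((integrableOn_one_add_rpow_neg hb).const_mul A).lintegral_lt_top).ne

lemma tendsto_lintegral_lintegral_discrepancyWeight_mul (hg : IsDecayingSource N A b g)
    (hb : 1 < b) (hgw : IsWeaklyMeasurable N g) :
    Tendsto (fun t ↦ ∫⁻ τ in Set.Ioi 0, ∫⁻ y,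
      discrepancyWeight N t τ y * ENNReal.ofReal (g τ y)) atTop (𝓝 0) := by
  have hconst : 2 * kernelConst N ≠ ⊤ := ENNReal.mul_ne_top ofNat_ne_top (kernelConst_ne_top N)
  rw [← lintegral_zero (μ := volume.restrict (Set.Ioi (0 : ℝ)))]
  refine tendsto_lintegral_filter_of_dominated_convergence'
    (fun τ ↦ 2 * kernelConst N * ∫⁻ y, ENNReal.ofReal (g τ y)) (.of_forall fun t ↦ ?_)
    (.of_forall fun t ↦ ae_of_all _ fun τ ↦ ?_) ?_ ?_
  · exact hgw _ (measurable_uncurry_discrepancyWeight N t) (continuous_discrepancyWeight N t)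
      fun τ ↦ ⟨_, hconst, discrepancyWeight_le t τ⟩
  · rw [← lintegral_const_mul' _ _ hconst]
    gcongr
    exact discrepancyWeight_le t τ _
  · rw [lintegral_const_mul'' _ hgw.aemeasurable_lintegral]
    exact ENNReal.mul_ne_top hconst (hg.lintegral_lintegral_ne_top hb)
  · filter_upwards [ae_restrict_mem measurableSet_Ioi] with τ hτ
    exact tendsto_lintegral_discrepancyWeight_mul τ
      (hg.aestronglyMeasurable τ hτ).aemeasurable.ennreal_ofReal
      (hg.integrable hτ).lintegral_lt_top.ne

lemma tendsto_duhamelError (hg : IsDecayingSource N A b g) (hb : 1 < b)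
    (hgw : IsWeaklyMeasurable N g) : Tendsto (duhamelError N A b g) atTop (𝓝 0) := by
  have hlate : Tendsto (fun t ↦ poissonMass N *
      ENNReal.ofReal (2 ^ N * (A * (1 + t / 2) ^ (-b))) * ENNReal.ofReal (t / 2)) atTop (𝓝 0) := by
    have h := ENNReal.Tendsto.const_mul (a := poissonMass N) (ENNReal.tendsto_ofReal
      ((tendsto_mul_one_add_half_rpow_neg hb).const_mul (2 ^ N * A))) (.inr (poissonMass_ne_top N))
    simp only [mul_zero, ENNReal.ofReal_zero] at h
    refine h.congr' ?_
    filter_upwards [eventually_ge_atTop 0] with t ht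
    rw [mul_assoc (poissonMass N), ← ENNReal.ofReal_mul' (by positivity)]
    congr 2
    ring
  simpa only [add_zero] using!
    (hg.tendsto_lintegral_lintegral_discrepancyWeight_mul hb hgw).add hlate

lemma integrableOn_poissonConv (hg : IsDecayingSource N A b g) (hb : 0 ≤ b)
    (hgw : IsWeaklyMeasurable N g) (t : ℝ) (x : EuclideanSpace ℝ (Fin N)) :
    IntegrableOn (fun τ ↦ poissonConv N (t - τ) (g τ) x) (Set.Ioo 0 t) := by
  refine .of_bound (by simp) (hgw.isDuhamelMeasurable (fun _ ↦ hg.integrable) hg.nonneg t x)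
    (poissonMass N * ENNReal.ofReal A).toReal ?_
  filter_upwards [ae_restrict_mem measurableSet_Ioo] with τ hτ
  rw [Real.norm_of_nonneg (poissonConv_nonneg (sub_pos.2 hτ.2) (hg.nonneg τ) x)]
  exact hg.poissonConv_le hb hτ x

lemma integrableOn_indicator_poissonConv (hg : IsDecayingSource N A b g) (hb : 0 ≤ b)
    (hgw : IsWeaklyMeasurable N g) (ht : 0 < t) (x : EuclideanSpace ℝ (Fin N)) :
    IntegrableOn ((Set.Iio (t / 2)).indicator fun τ ↦ poissonConv N (t - τ) (g τ) x)
      (Set.Ioi 0) := by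
  rw [IntegrableOn, integrable_indicator_iff measurableSet_Iio, IntegrableOn,
    Measure.restrict_restrict measurableSet_Iio, Set.Iio_inter_Ioi]
  exact (hg.integrableOn_poissonConv hb hgw t x).mono_set
    (Set.Ioo_subset_Ioo_right (half_le_self ht.le))

lemma integral_eq_toReal_lintegral (hg : IsDecayingSource N A b g) (hτ : 0 < τ) :
    ∫ y, g τ y = (∫⁻ y, ENNReal.ofReal (g τ y)).toReal :=
  integral_eq_lintegral_of_nonneg_ae (ae_of_all _ (hg.nonneg τ)) (hg.aestronglyMeasurable τ hτ)

lemma integrableOn_integral (hg : IsDecayingSource N A b g) (hb : 1 < b)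
    (hgw : IsWeaklyMeasurable N g) : IntegrableOn (fun τ ↦ ∫ y, g τ y) (Set.Ioi 0) :=
  (integrable_toReal_of_lintegral_ne_top hgw.aemeasurable_lintegral
    (hg.lintegral_lintegral_ne_top hb)).congr <|
    (ae_restrict_mem measurableSet_Ioi).mono fun _ hτ ↦ (hg.integral_eq_toReal_lintegral hτ).symm

lemma integral_integral_eq_toReal_lintegral (hg : IsDecayingSource N A b g)
    (hgw : IsWeaklyMeasurable N g) :
    ∫ τ in Set.Ioi 0, ∫ y, g τ y =
      (∫⁻ τ in Set.Ioi 0, ∫⁻ y, ENNReal.ofReal (g τ y)).toReal := by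
  rw [← integral_toReal hgw.aemeasurable_lintegral]
  · exact setIntegral_congr_fun measurableSet_Ioi fun τ hτ ↦ hg.integral_eq_toReal_lintegral hτ
  · filter_upwards [ae_restrict_mem measurableSet_Ioi] with τ hτ
    exact (hg.integrable hτ).lintegral_lt_top

lemma integral_discrepancyKernel_mul_eq_indicator (hg : IsDecayingSource N A b g) (ht : 0 < t)
    (hτ : 0 < τ) (x : EuclideanSpace ℝ (Fin N)) :
    ∫ y, discrepancyKernel N t τ x y * g τ y =
      (Set.Iio (t / 2)).indicator (fun τ ↦ poissonConv N (t - τ) (g τ) x) τ -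
        (∫ y, g τ y) * Pt N (t + 1) x :=
  integral_discrepancyKernel_mul ht (hg.integrable hτ) x

lemma aestronglyMeasurable_uncurry_integral_discrepancyKernel_mul (hg : IsDecayingSource N A b g)
    (hb : 1 < b) (hgw : IsWeaklyMeasurable N g) (ht : 0 < t) :
    AEStronglyMeasurable (fun τ x ↦ ∫ y, discrepancyKernel N t τ x y * g τ y).uncurry
      ((volume.restrict (Set.Ioi 0)).prod volume) := by
  refine aestronglyMeasurable_uncurry_of_ae_continuous ?_ fun x ↦ ?_
  · filter_upwards [ae_restrict_mem measurableSet_Ioi] with τ hτ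
    simp_rw [integral_discrepancyKernel_mul ht (hg.integrable hτ)]
    refine .sub ?_ (continuous_const.mul (continuous_Pt N _))
    split_ifs
    exacts [continuous_poissonConv (by linarith) (hg.integrable hτ), continuous_const]
  · refine ((hg.integrableOn_indicator_poissonConv (by linarith) hgw ht x).1.sub
      ((hg.integrableOn_integral hb hgw).1.mul_const (Pt N (t + 1) x))).congr ?_
    filter_upwards [ae_restrict_mem measurableSet_Ioi] with τ hτ
    exact (hg.integral_discrepancyKernel_mul_eq_indicator ht hτ x).symm

lemma endpointBound_integral_discrepancyKernel (hg : IsDecayingSource N A b g) (hb : 1 < b)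
    (hgw : IsWeaklyMeasurable N g) (ht : 0 < t) :
    EndpointBound volume (ENNReal.ofReal (t ^ (-(N : ℝ))))
      (∫⁻ τ in Set.Ioi 0, ∫⁻ y, discrepancyWeight N t τ y * ENNReal.ofReal (g τ y))
      fun x ↦ ∫ τ in Set.Ioi 0, ∫ y, discrepancyKernel N t τ x y * g τ y := by
  refine .integral (F := fun τ x ↦ ∫ y, discrepancyKernel N t τ x y * g τ y)
    (hg.aestronglyMeasurable_uncurry_integral_discrepancyKernel_mul hb hgw ht) ?_
    ENNReal.ofReal_ne_top
  filter_upwards [ae_restrict_mem measurableSet_Ioi] with τ hτ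
  simpa only [hg.enorm_apply] using endpointBound_integral_discrepancyKernel_mul ht
    (Set.mem_Ioi.1 hτ).le (hg.aestronglyMeasurable τ hτ)

lemma rpow_le_of_half_le (hg : IsDecayingSource N A b g) (hb : 0 ≤ b) (ht : 0 < t)
    (hτ : t / 2 ≤ τ) :
    A * (1 + τ) ^ (-(b + N)) ≤ 2 ^ N * (A * (1 + t / 2) ^ (-b)) * t ^ (-(N : ℝ)) := by
  have hA := hg.const_nonneg
  have hτ_pos : 0 < τ := (half_pos ht).trans_le hτ
  calc A * (1 + τ) ^ (-(b + N))
      = A * ((1 + τ) ^ (-b) * (1 + τ) ^ (-(N : ℝ))) := by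
        rw [neg_add, Real.rpow_add (by linarith)]
    _ ≤ A * ((1 + t / 2) ^ (-b) * (t / 2) ^ (-(N : ℝ))) := by
        gcongr A * ?_
        exact mul_le_mul
          (Real.rpow_le_rpow_of_nonpos (by linarith) (by linarith) (neg_nonpos.2 hb))
          (Real.rpow_le_rpow_of_nonpos (by linarith) (by linarith) (by simp))
          (by positivity) (by positivity)
    _ = 2 ^ N * (A * (1 + t / 2) ^ (-b)) * t ^ (-(N : ℝ)) := by
        rw [half_rpow_neg_natCast ht.le]
        ring

lemma endpointBound_poissonConv (hg : IsDecayingSource N A b g) (hb : 0 ≤ b) (ht : 0 < t)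
    (hτ : τ ∈ Set.Ioo (t / 2) t) :
    EndpointBound volume (ENNReal.ofReal (t ^ (-(N : ℝ))))
      (poissonMass N * ENNReal.ofReal (2 ^ N * (A * (1 + t / 2) ^ (-b))))
      (poissonConv N (t - τ) (g τ)) := by
  have hA := hg.const_nonneg
  have hτ_pos : 0 < τ := (half_pos ht).trans hτ.1
  refine _root_.endpointBound_poissonConv (sub_pos.2 hτ.2) (hg.aestronglyMeasurable τ hτ_pos) ?_ ?_
  · filter_upwards [hg.ae_le τ hτ_pos] with y hy
    rw [hg.enorm_apply, ← ENNReal.ofReal_mul (by positivity)]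
    exact ENNReal.ofReal_le_ofReal (hy.trans (hg.rpow_le_of_half_le hb ht hτ.1.le))
  · simp_rw [hg.enorm_apply]
    refine (hg.lintegral_le τ hτ_pos).trans (ENNReal.ofReal_le_ofReal ?_)
    calc A * (1 + τ) ^ (-b) ≤ A * (1 + t / 2) ^ (-b) := mul_le_mul_of_nonneg_left
          (Real.rpow_le_rpow_of_nonpos (by linarith) (by linarith [hτ.1]) (by simpa)) hA
      _ ≤ 2 ^ N * (A * (1 + t / 2) ^ (-b)) :=
          le_mul_of_one_le_left (by positivity) (one_le_pow₀ one_le_two)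

lemma endpointBound_integral_poissonConv (hg : IsDecayingSource N A b g) (hb : 0 ≤ b)
    (hgw : IsWeaklyMeasurable N g) (ht : 0 < t) :
    EndpointBound volume (ENNReal.ofReal (t ^ (-(N : ℝ))))
      (poissonMass N * ENNReal.ofReal (2 ^ N * (A * (1 + t / 2) ^ (-b))) * ENNReal.ofReal (t / 2))
      fun x ↦ ∫ τ in Set.Ioo (t / 2) t, poissonConv N (t - τ) (g τ) x := by
  have hmeas := (hgw.isDuhamelMeasurable (fun _ ↦ hg.integrable) hg.nonneg
    t).aestronglyMeasurable_uncurry fun _ ↦ hg.integrable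
  have h := EndpointBound.integral (μ := volume) (ν := volume.restrict (Set.Ioo (t / 2) t))
    (F := fun τ x ↦ poissonConv N (t - τ) (g τ) x)
    (hmeas.mono_measure (Measure.prod_mono (Measure.restrict_mono_set _
      (Set.Ioo_subset_Ioo_left (half_pos ht).le)) le_rfl))
    ((ae_restrict_mem measurableSet_Ioo).mono fun _ hτ ↦ hg.endpointBound_poissonConv hb ht hτ)
    ENNReal.ofReal_ne_top
  simpa only [setLIntegral_const, Real.volume_Ioo, sub_self_div_two] using h

lemma integral_poissonConv_sub_eq (hg : IsDecayingSource N A b g) (hb : 1 < b)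
    (hgw : IsWeaklyMeasurable N g) (ht : 0 < t) (x : EuclideanSpace ℝ (Fin N)) :
    (∫ τ in (0 : ℝ)..t, poissonConv N (t - τ) (g τ) x) -
        (∫⁻ τ in Set.Ioi 0, ∫⁻ y, ENNReal.ofReal (g τ y)).toReal * Pt N (t + 1) x =
      (∫ τ in Set.Ioi 0, ∫ y, discrepancyKernel N t τ x y * g τ y) +
        ∫ τ in Set.Ioo (t / 2) t, poissonConv N (t - τ) (g τ) x := by
  have hb0 : 0 ≤ b := by linarith
  have hint : IntervalIntegrable (fun τ ↦ poissonConv N (t - τ) (g τ) x) volume 0 t :=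
    (intervalIntegrable_iff_integrableOn_Ioo_of_le ht.le).2
      (hg.integrableOn_poissonConv hb0 hgw t x)
  have hearly : ∫ τ in Set.Ioi 0, ∫ y, discrepancyKernel N t τ x y * g τ y =
      (∫ τ in (0 : ℝ)..t / 2, poissonConv N (t - τ) (g τ) x) -
        (∫⁻ τ in Set.Ioi 0, ∫⁻ y, ENNReal.ofReal (g τ y)).toReal * Pt N (t + 1) x := by
    rw [setIntegral_congr_fun measurableSet_Ioi fun τ hτ ↦
        hg.integral_discrepancyKernel_mul_eq_indicator ht hτ x,
      integral_sub (hg.integrableOn_indicator_poissonConv hb0 hgw ht x)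
        ((hg.integrableOn_integral hb hgw).mul_const _),
      integral_mul_const, hg.integral_integral_eq_toReal_lintegral hgw,
      integral_indicator measurableSet_Iio, Measure.restrict_restrict measurableSet_Iio,
      Set.Iio_inter_Ioi, intervalIntegral.integral_of_le (half_pos ht).le,
      integral_Ioc_eq_integral_Ioo]
  have hsplit := intervalIntegral.integral_add_adjacent_intervals
    (hint.mono_set (Set.uIcc_subset_uIcc_left (Set.mem_uIcc_of_le (half_pos ht).le
      (half_le_self ht.le))))
    (hint.mono_set (Set.uIcc_subset_uIcc_right (Set.mem_uIcc_of_le (half_pos ht).le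
      (half_le_self ht.le))))
  rw [hearly, ← hsplit, intervalIntegral.integral_of_le (half_le_self ht.le),
    integral_Ioc_eq_integral_Ioo]
  ring

lemma endpointBound_integral_poissonConv_sub (hg : IsDecayingSource N A b g) (hb : 1 < b)
    (hgw : IsWeaklyMeasurable N g) (ht : 0 < t) :
    EndpointBound volume (ENNReal.ofReal (t ^ (-(N : ℝ)))) (duhamelError N A b g t)
      fun x ↦ (∫ τ in (0 : ℝ)..t, poissonConv N (t - τ) (g τ) x) -
        (∫⁻ τ in Set.Ioi 0, ∫⁻ y, ENNReal.ofReal (g τ y)).toReal * Pt N (t + 1) x := by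
  simp_rw [hg.integral_poissonConv_sub_eq hb hgw ht]
  exact (hg.endpointBound_integral_discrepancyKernel hb hgw ht).add
    (hg.endpointBound_integral_poissonConv (by linarith) hgw ht)
    (AEStronglyMeasurable.integral_prod_right' (AEStronglyMeasurable.prod_swap
      (hg.aestronglyMeasurable_uncurry_integral_discrepancyKernel_mul hb hgw ht)))

end IsDecayingSource

end Duhamel

section GradientDecay

variable {α E : Type*} [MeasurableSpace α] [NormedAddCommGroup E] {μ : Measure α} {f : α → E}
  {C p : ℝ}

lemma ae_norm_rpow_le_of_eLpNorm_top_le (hC : 0 ≤ C) (hp : 0 ≤ p)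
    (h : eLpNorm f ⊤ μ ≤ ENNReal.ofReal C) : ∀ᵐ x ∂μ, ‖f x‖ ^ p ≤ C ^ p := by
  filter_upwards [ae_le_eLpNormEssSup (f := f) (μ := μ)] with x hx
  rw [eLpNorm_exponent_top] at h
  have hxC := hx.trans h
  rw [← ofReal_norm, ENNReal.ofReal_le_ofReal_iff hC] at hxC
  exact Real.rpow_le_rpow (norm_nonneg _) hxC hp

lemma lintegral_norm_rpow_le_of_eLpNorm_le (hC : 0 ≤ C) (hp : 0 < p)
    (h : eLpNorm f (ENNReal.ofReal p) μ ≤ ENNReal.ofReal C) :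
    ∫⁻ x, ENNReal.ofReal (‖f x‖ ^ p) ∂μ ≤ ENNReal.ofReal (C ^ p) := by
  rw [eLpNorm_eq_lintegral_rpow_enorm_toReal (by simpa using hp) ENNReal.ofReal_ne_top,
    ENNReal.toReal_ofReal hp.le, one_div, ENNReal.rpow_inv_le_iff hp,
    ENNReal.ofReal_rpow_of_nonneg hC hp.le] at h
  simpa only [← ENNReal.ofReal_rpow_of_nonneg (norm_nonneg _) hp.le, ofReal_norm] using h

lemma le_ofReal_mul_rpow_neg {s a : ℝ} {c M : ℝ≥0∞} (hs : 0 < s) (hM : M ≠ ⊤)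
    (h : ENNReal.ofReal (s ^ a) * c ≤ M) : c ≤ ENNReal.ofReal (M.toReal * s ^ (-a)) := by
  have hsa : 0 < s ^ a := by positivity
  rw [ENNReal.ofReal_mul ENNReal.toReal_nonneg, ENNReal.ofReal_toReal hM, Real.rpow_neg hs.le,
    ENNReal.ofReal_inv_of_pos hsa, ← div_eq_mul_inv,
    ENNReal.le_div_iff_mul_le (.inl (by simpa using hsa)) (.inl ENNReal.ofReal_ne_top), mul_comm]
  exact h

end GradientDecay

section Asymptotics

variable {N : ℕ} {A b p t : ℝ} {u₀ : EuclideanSpace ℝ (Fin N) → ℝ}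
  {v : EuclideanSpace ℝ (Fin N) → ℝ → ℝ}

/-- The nonlinear source term `|∇v(·, τ)|^p` of the mild formulation. -/
noncomputable def gradientSource (p : ℝ) (v : EuclideanSpace ℝ (Fin N) → ℝ → ℝ) (τ : ℝ)
    (y : EuclideanSpace ℝ (Fin N)) : ℝ :=
  ‖gradient (fun z ↦ v z τ) y‖ ^ p

lemma gradientSource_eq_norm_fderiv_rpow (p : ℝ) (v : EuclideanSpace ℝ (Fin N) → ℝ → ℝ) (τ : ℝ) :
    gradientSource p v τ = fun y ↦ ‖fderiv ℝ (fun z ↦ v z τ) y‖ ^ p := by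
  funext y
  simp only [gradientSource, gradient, LinearIsometryEquiv.norm_map]

lemma isDecayingSource_gradientSource (hp : 0 < p) {M₁ M₂ : ℝ≥0∞} (hM₁ : M₁ ≠ ⊤) (hM₂ : M₂ ≠ ⊤)
    (h₁ : ∀ t > 0, ENNReal.ofReal ((1 + t) ^ (N * (1 - (1 / ENNReal.ofReal p).toReal) + 1)) *
      eLpNorm (fun x ↦ ‖gradient (fun z ↦ v z t) x‖) (ENNReal.ofReal p) volume ≤ M₁)
    (h₂ : ∀ t > 0, ENNReal.ofReal ((1 + t) ^ (N * (1 - (1 / (⊤ : ℝ≥0∞)).toReal) + 1)) *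
      eLpNorm (fun x ↦ ‖gradient (fun z ↦ v z t) x‖) ⊤ volume ≤ M₂) :
    IsDecayingSource N (M₁.toReal ^ p + M₂.toReal ^ p) (N * (p - 1) + p) (gradientSource p v) where
  nonneg τ y := Real.rpow_nonneg (norm_nonneg _) p
  aestronglyMeasurable τ _ := by
    rw [gradientSource_eq_norm_fderiv_rpow]
    exact ((measurable_fderiv ℝ _).norm.pow_const p).aestronglyMeasurable
  ae_le τ hτ := by
    have h := le_ofReal_mul_rpow_neg (by positivity) hM₂ (h₂ τ hτ)
    rw [eLpNorm_norm] at h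
    filter_upwards [ae_norm_rpow_le_of_eLpNorm_top_le (by positivity) hp.le h] with y hy
    refine hy.trans ?_
    rw [Real.mul_rpow (by positivity) (by positivity), ← Real.rpow_mul (by positivity),
      show -(N * (1 - (1 / (⊤ : ℝ≥0∞)).toReal) + 1) * p = -(N * (p - 1) + p + N) by simp; ring]
    gcongr
    exact le_add_of_nonneg_left (by positivity)
  lintegral_le τ hτ := by
    have h := le_ofReal_mul_rpow_neg (by positivity) hM₁ (h₁ τ hτ)
    rw [eLpNorm_norm] at h
    refine (lintegral_norm_rpow_le_of_eLpNorm_le (by positivity) hp h).trans ?_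
    rw [Real.mul_rpow (by positivity) (by positivity), ← Real.rpow_mul (by positivity),
      show -(N * (1 - (1 / ENNReal.ofReal p).toReal) + 1) * p = -(N * (p - 1) + p) by
        rw [ENNReal.toReal_div, ENNReal.toReal_ofReal hp.le, ENNReal.toReal_one]; field_simp]
    gcongr
    exact le_add_of_nonneg_right (by positivity)

lemma measurable_uncurry_gradientSource_poissonConv (p : ℝ) (hu₀ : Integrable u₀) :
    Measurable (gradientSource p fun x t ↦ poissonConv N (exp (log t)) u₀ x).uncurry := by
  have hcont : Continuous (fun a x ↦ poissonConv N (exp a) u₀ x).uncurry := by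
    refine continuous_iff_continuousAt.2 fun z ↦ ?_
    exact (continuousAt_uncurry_poissonConv (exp_pos z.1) hu₀ z.2).comp
      (f := fun z : ℝ × EuclideanSpace ℝ (Fin N) ↦ (exp z.1, z.2)) (by fun_prop)
  have hfderiv := (measurable_fderiv_with_param ℝ hcont).comp
    (f := fun z : ℝ × EuclideanSpace ℝ (Fin N) ↦ (log z.1, z.2)) (by fun_prop)
  have heq : (gradientSource p fun x t ↦ poissonConv N (exp (log t)) u₀ x).uncurry = fun z ↦
      ‖fderiv ℝ (fun x ↦ poissonConv N (exp (log z.1)) u₀ x) z.2‖ ^ p :=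
    funext fun z ↦ congr_fun (gradientSource_eq_norm_fderiv_rpow p _ z.1) z.2
  exact heq ▸ hfderiv.norm.pow_const p

-- If the Duhamel integrand is not measurable at time `t`, then `v(·, t) = P_t * u₀`. Writing the
-- latter with `exp (log t)` in place of `t` makes it continuous in all real `log t`.
lemma isWeaklyMeasurable_gradientSource (hg : IsDecayingSource N A b (gradientSource p v))
    (hb : 0 ≤ b) (hu₀ : Integrable u₀) (hv : ∀ t > 0, Continuous (v · t))
    (hmild : ∀ t > 0, ∀ᵐ x, v x t = poissonConv N t u₀ x +
      ∫ τ in (0 : ℝ)..t, poissonConv N (t - τ) (gradientSource p v τ) x) :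
    IsWeaklyMeasurable N (gradientSource p v) := by
  refine isWeaklyMeasurable_of_forall_or_eq (fun _ ↦ hg.integrable) hg.nonneg
    (measurable_uncurry_gradientSource_poissonConv p hu₀) fun t ht ↦ ?_
  refine (hg.isDuhamelMeasurable_or_eq_zero hb ht ((hv t ht).sub (continuous_poissonConv ht hu₀))
    ?_).imp_right fun h ↦ ?_
  · filter_upwards [hmild t ht] with x hx
    rw [Pi.sub_apply, hx, add_sub_cancel_left]
  · have hvt : (v · t) = poissonConv N t u₀ := sub_eq_zero.1 h
    funext y
    simp only [gradientSource, exp_log ht, hvt]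

lemma endpointBound_poissonConv_sub (ht : 0 < t) (hu₀ : Integrable u₀) :
    EndpointBound volume (ENNReal.ofReal (t ^ (-(N : ℝ))))
      (∫⁻ y, discrepancyWeight N t 0 y * ‖u₀ y‖ₑ)
      fun x ↦ poissonConv N t u₀ x - (∫ y, u₀ y) * Pt N (t + 1) x := by
  simpa only [integral_discrepancyKernel_mul ht hu₀, half_pos ht, if_true, sub_zero] using
    endpointBound_integral_discrepancyKernel_mul ht le_rfl hu₀.1

lemma tendsto_rpow_mul_eLpNorm_of_endpointBound {α E : Type*} [MeasurableSpace α]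
    [NormedAddCommGroup E] {μ : Measure α} {f : ℝ → α → E} {ε : ℝ → ℝ≥0∞} {d : ℝ}
    (h : ∀ t > 0, EndpointBound μ (ENNReal.ofReal (t ^ (-d))) (ε t) (f t))
    (hε : Tendsto ε atTop (𝓝 0)) {q : ℝ≥0∞} (hq : 1 ≤ q) :
    Tendsto (fun t ↦ ENNReal.ofReal (t ^ (d * (1 - (1 / q).toReal))) * eLpNorm (f t) q μ)
      atTop (𝓝 0) := by
  refine tendsto_of_tendsto_of_tendsto_of_le_of_le' tendsto_const_nhds hε
    (.of_forall fun _ ↦ zero_le) ?_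
  filter_upwards [eventually_gt_atTop 0, hε.eventually_ne ENNReal.zero_ne_top] with t ht hεt
  have hscale : ENNReal.ofReal (t ^ (d * (1 - (1 / q).toReal))) *
      ENNReal.ofReal (t ^ (-d)) ^ (1 - (1 / q).toReal) = 1 := by
    have hexp : 0 ≤ 1 - (1 / q).toReal := by
      simpa using ENNReal.toReal_mono one_ne_top (ENNReal.inv_le_one.2 hq)
    rw [ENNReal.ofReal_rpow_of_nonneg (by positivity) hexp, ← ENNReal.ofReal_mul (by positivity),
      ← Real.rpow_mul ht.le, ← Real.rpow_add ht]
    simp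
  grw [(h t ht).eLpNorm_le hεt ENNReal.ofReal_ne_top hq, mul_left_comm, hscale, mul_one]

end Asymptotics

theorem stmt_18_general (N : ℕ) (p : ℝ) (hp : 1 < p)
    (u0 : EuclideanSpace ℝ (Fin N) → ℝ) (hu0 : Integrable u0 volume)
    (v : EuclideanSpace ℝ (Fin N) → ℝ → ℝ)
    (hdiff : ∀ t : ℝ, 0 < t → Differentiable ℝ (fun x ↦ v x t))
    (hmild : ∀ t : ℝ, 0 < t → ∀ᵐ x ∂(volume : Measure (EuclideanSpace ℝ (Fin N))),
        v x t = (∫ y, Pt N t (x - y) * u0 y)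
          + ∫ τ in (0:ℝ)..t, ∫ y, Pt N (t - τ) (x - y)
              * ‖gradient (fun z ↦ v z τ) y‖ ^ p)
    (hdecay1 : ∀ q ∈ ({ENNReal.ofReal p, ⊤} : Set ℝ≥0∞),
        ∃ M : ℝ≥0∞, M ≠ ⊤ ∧ ∀ t : ℝ, 0 < t →
          ENNReal.ofReal ((1 + t) ^ ((N : ℝ) * (1 - (1 / q).toReal) + 1))
            * eLpNorm (fun x ↦ ‖gradient (fun z ↦ v z t) x‖) q volume ≤ M)
    (Cstar : ℝ)
    (hCstar : Cstar = (∫ x, u0 x)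
        + (∫⁻ τ in Set.Ioi (0:ℝ), ∫⁻ x : EuclideanSpace ℝ (Fin N),
            ENNReal.ofReal (‖gradient (fun z ↦ v z τ) x‖ ^ p)).toReal) :
    ∀ q : ℝ≥0∞, 1 ≤ q →
      Tendsto (fun t : ℝ ↦ ENNReal.ofReal (t ^ ((N : ℝ) * (1 - (1 / q).toReal)))
          * eLpNorm (fun x ↦ v x t - Cstar * Pt N (t + 1) x) q volume)
        atTop (nhds 0) := by
  intro q hq
  obtain ⟨M₁, hM₁, h₁⟩ := hdecay1 (ENNReal.ofReal p) (by simp)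
  obtain ⟨M₂, hM₂, h₂⟩ := hdecay1 ⊤ (by simp)
  have hg := isDecayingSource_gradientSource (by linarith) hM₁ hM₂ h₁ h₂
  have hb : 1 < N * (p - 1) + p := by nlinarith [N.cast_nonneg (α := ℝ)]
  have hgw := isWeaklyMeasurable_gradientSource hg (by linarith) hu0
    (fun t ht ↦ (hdiff t ht).continuous) hmild
  have hlin := tendsto_lintegral_discrepancyWeight_mul 0 hu0.1.enorm hu0.2.ne
  have hbound (t : ℝ) (ht : 0 < t) := (endpointBound_poissonConv_sub ht hu0).add
    (hg.endpointBound_integral_poissonConv_sub hb hgw ht)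
    ((continuous_poissonConv ht hu0).sub
      (continuous_const.mul (continuous_Pt N _))).aestronglyMeasurable
  have hlim := tendsto_rpow_mul_eLpNorm_of_endpointBound hbound
    (by simpa using hlin.add (hg.tendsto_duhamelError hb hgw)) hq
  refine hlim.congr' ?_
  filter_upwards [eventually_gt_atTop 0] with t ht
  congr 1
  refine eLpNorm_congr_ae ?_
  filter_upwards [hmild t ht] with x hx
  simp only [hx, hCstar, Pi.add_apply, poissonConv, gradientSource]
  ring

theorem stmt_18 (N : ℕ) (hN : 1 ≤ N) (p : ℝ) (hp : 1 < p)
    (u0 : EuclideanSpace ℝ (Fin N) → ℝ) (hu0 : Integrable u0 volume)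
    (v : EuclideanSpace ℝ (Fin N) → ℝ → ℝ)
    (hdiff : ∀ t : ℝ, 0 < t → Differentiable ℝ (fun x => v x t))
    (hmild : ∀ t : ℝ, 0 < t → ∀ᵐ x ∂(volume : Measure (EuclideanSpace ℝ (Fin N))),
        v x t = (∫ y, Pt N t (x - y) * u0 y)
          + ∫ τ in (0:ℝ)..t, ∫ y, Pt N (t - τ) (x - y)
              * ‖gradient (fun z => v z τ) y‖ ^ p)
    (hdecay0 : ∀ q : ℝ≥0∞, 1 ≤ q →
        ∃ M : ℝ≥0∞, M ≠ ⊤ ∧ ∀ t : ℝ, 0 < t →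
          ENNReal.ofReal ((1 + t) ^ ((N : ℝ) * (1 - (1 / q).toReal)))
            * eLpNorm (fun x => v x t) q volume ≤ M)
    (hdecay1 : ∀ q : ℝ≥0∞, 1 ≤ q →
        ∃ M : ℝ≥0∞, M ≠ ⊤ ∧ ∀ t : ℝ, 0 < t →
          ENNReal.ofReal ((1 + t) ^ ((N : ℝ) * (1 - (1 / q).toReal) + 1))
            * eLpNorm (fun x => ‖gradient (fun z => v z t) x‖) q volume ≤ M)
    (Cstar : ℝ)
    (hCstar : Cstar = (∫ x, u0 x)
        + (∫⁻ τ in Set.Ioi (0:ℝ), ∫⁻ x : EuclideanSpace ℝ (Fin N),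
            ENNReal.ofReal (‖gradient (fun z => v z τ) x‖ ^ p)).toReal) :
    ∀ q : ℝ≥0∞, 1 ≤ q →
      Tendsto (fun t : ℝ => ENNReal.ofReal (t ^ ((N : ℝ) * (1 - (1 / q).toReal)))
          * eLpNorm (fun x => v x t - Cstar * Pt N (t + 1) x) q volume)
        atTop (nhds 0) := by
  refine stmt_18_general N p hp u0 hu0 v hdiff hmild (fun q hq ↦ hdecay1 q ?_) Cstar hCstar
  rcases hq with rfl | rfl
  exacts [ENNReal.one_le_ofReal.2 hp.le, le_top]
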